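/- Let l ≥ 1 and k < ω. For every finite Souslin measurable colouring c of 𝓔_k(ω·l) and every E ∈ 𝓔_∞(ω·l), there exists F ∈ 𝓔_∞(ω·l) with F ≤ E such that c is constant on 𝓔_k(ω·l) ↾ F = {F' ∈ 𝓔_k(ω·l) : F' ≤ F}. -/

import Mathlib

open Set

namespace DualRamsey

/-- `F` is a coarsening of `E` (written `F ≤ E` in the paper): every class of `F`
is a union of classes of `E`. -/
def Coarsens {X : Type*} (F E : Setoid X) : Prop := ∀ a b, E.r a b → F.r a b

/-- The set of equivalence classes of a setoid. -/
def classes {X : Type*} (E : Setoid X) : Set (Set X) := {C | ∃ x, C = {y | E.r x y}}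

/-- The set of minimal representatives of the classes of an equivalence relation on ℕ. -/
def minReps (E : Setoid ℕ) : Set ℕ := {n | ∀ m, E.r n m → n ≤ m}

/-- `pRep E k` is `p_k(E)`, the k-th minimal representative in increasing order. -/
noncomputable def pRep (E : Setoid ℕ) (k : ℕ) : ℕ := Nat.nth (· ∈ minReps E) k

/-- `approx n E` is the n-th approximation `r_n(E)`: `E` restricted to `{0,…,p_n(E)-1}`,
identified with its graph. -/
noncomputable def approx (n : ℕ) (E : Setoid ℕ) : Set (ℕ × ℕ) :=
  {q | q.1 < pRep E n ∧ q.2 < pRep E n ∧ E.r q.1 q.2}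

/-- Basic set `[a, E]` relative to a space `S` of equivalence relations. -/
noncomputable def basicSet (S : Set (Setoid ℕ)) (a : Set (ℕ × ℕ)) (E : ↥S) : Set ↥S :=
  {F | Coarsens F.1 E.1 ∧ ∃ n, approx n F.1 = a}

/-- The Ellentuck topology on a space `S` of equivalence relations. -/
noncomputable def ellentuckTop (S : Set (Setoid ℕ)) : TopologicalSpace ↥S :=
  TopologicalSpace.generateFrom {U | ∃ a E, U = basicSet S a E}

def IsRamsey (S : Set (Setoid ℕ)) (X : Set ↥S) : Prop :=
  ∀ (a : Set (ℕ × ℕ)) (B : ↥S), (basicSet S a B).Nonempty →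
    ∃ A ∈ basicSet S a B, basicSet S a A ⊆ X ∨ basicSet S a A ∩ X = ∅

def IsRamseyNull (S : Set (Setoid ℕ)) (X : Set ↥S) : Prop :=
  ∀ (a : Set (ℕ × ℕ)) (B : ↥S), (basicSet S a B).Nonempty →
    ∃ A ∈ basicSet S a B, basicSet S a A ∩ X = ∅

/-- The property of Baire with respect to the Ellentuck topology. -/
noncomputable def HasBP (S : Set (Setoid ℕ)) (X : Set ↥S) : Prop :=
  ∃ O M : Set ↥S, (ellentuckTop S).IsOpen O ∧ @IsMeagre _ (ellentuckTop S) M ∧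
    X = (O \ M) ∪ (M \ O)

/-- The Souslin operation applied to a scheme indexed by finite sequences of naturals. -/
def souslinOp {X : Type*} (A : List ℕ → Set X) : Set X :=
  ⋃ x : ℕ → ℕ, ⋂ n : ℕ, A ((List.range n).map x)

/-- `Y` belongs to the smallest field of sets containing all `t`-open sets and
closed under the Souslin operation. -/
def SouslinMeasurable {X : Type*} (t : TopologicalSpace X) (Y : Set X) : Prop :=
  ∀ 𝒜 : Set (Set X),
    (∀ U, t.IsOpen U → U ∈ 𝒜) →
    (∀ A ∈ 𝒜, Aᶜ ∈ 𝒜) →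
    (∀ A ∈ 𝒜, ∀ B ∈ 𝒜, A ∪ B ∈ 𝒜) →
    (∀ f : List ℕ → Set X, (∀ s, f s ∈ 𝒜) → souslinOp f ∈ 𝒜) →
    Y ∈ 𝒜

/-- The graph of an equivalence relation as a boolean-valued function. -/
noncomputable def graphMap {X : Type*} (E : Setoid X) : X × X → Bool :=
  fun q => @decide (E.r q.1 q.2) (Classical.dec _)

/-- The metrizable topology on a space of equivalence relations, as a subspace of
`2^(X × X)` via graphs. -/
noncomputable def graphTop {X : Type*} (S : Set (Setoid X)) : TopologicalSpace ↥S :=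
  TopologicalSpace.induced (fun E => graphMap E.1) inferInstance



/-! Equivalence relations on `ω·l`, identified with `ℕ × Fin l` where `(n,i)`
corresponds to the ordinal `ω·i + n`. -/

/-- The ordinal order on `ω·l ≅ ℕ × Fin l`. -/
def ordLE {l : ℕ} (a b : ℕ × Fin l) : Prop := a.2 < b.2 ∨ (a.2 = b.2 ∧ a.1 ≤ b.1)

/-- The lexicographic order `⪯` on `ω·l ≅ ℕ × Fin l`. -/
def lexLE {l : ℕ} (a b : ℕ × Fin l) : Prop := a.1 < b.1 ∨ (a.1 = b.1 ∧ a.2 ≤ b.2)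

/-- The set `p(E)` of minimal (in the ordinal order) representatives of the classes. -/
def minRepsL {l : ℕ} (E : Setoid (ℕ × Fin l)) : Set (ℕ × Fin l) :=
  {a | ∀ b, E.r a b → ordLE a b}

/-- The set of `⪯`-minimal representatives of the classes. -/
def lexMinRepsL {l : ℕ} (E : Setoid (ℕ × Fin l)) : Set (ℕ × Fin l) :=
  {a | ∀ b, E.r a b → lexLE a b}

/-- The `n`-th element of `ω·l` in the `⪯`-order. -/
def decodeL (l : ℕ) (hl : 0 < l) (n : ℕ) : ℕ × Fin l := (n / l, ⟨n % l, Nat.mod_lt n hl⟩)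

/-- `p_k(E)`: the `k`-th element of `p(E)` in the `⪯`-increasing enumeration. -/
noncomputable def pRepL (l : ℕ) (hl : 0 < l) (E : Setoid (ℕ × Fin l)) (k : ℕ) :
    ℕ × Fin l :=
  decodeL l hl (Nat.nth (fun n => decodeL l hl n ∈ minRepsL E) k)

/-- `𝓔_∞(ω·l)`: equivalence relations on `ω·l` with infinitely many classes whose
`⪯`-increasing enumeration `(p_k)` of minimal representatives satisfies
`p_k ∈ ω × {k mod l}`, and whose `⪯`-minimal representatives coincide with the
(ordinal-)minimal representatives. -/
noncomputable def EInfL (l : ℕ) (hl : 0 < l) : Set (Setoid (ℕ × Fin l)) :=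
  {E | (classes E).Infinite ∧
    (∀ k : ℕ, (pRepL l hl E k).2 = ⟨k % l, Nat.mod_lt k hl⟩) ∧
    lexMinRepsL E = minRepsL E}

/-- `𝓔_k(ω·l)`: equivalence relations on `ω·l` with exactly `k` classes whose
`⪯`-increasing enumeration `(p_i)_{i<k}` of minimal representatives satisfies
`p_i ∈ ω × {i mod l}` for `i < k`, and whose `⪯`-minimal representatives coincide
with the (ordinal-)minimal representatives. -/
noncomputable def EkL (l : ℕ) (hl : 0 < l) (k : ℕ) : Set (Setoid (ℕ × Fin l)) :=
  {E | (classes E).Finite ∧ (classes E).ncard = k ∧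
    (∀ i < k, (pRepL l hl E i).2 = ⟨i % l, Nat.mod_lt i hl⟩) ∧
    lexMinRepsL E = minRepsL E}

/-! Along the `⪯`-increasing enumeration of `ω·l`, the elements of `𝓔_∞(ω·l)` and `𝓔_k(ω·l)` are
the kernels of certain surjections `ω → ω` and `ω → k`, and coarsening becomes composition on the
right. Souslin measurable sets have the Baire property, so the colouring is continuous on a
comeagre set of surjections, and a category argument finds a `w` for which every `v ∘ w` lies in
this set. The colour of `v` then depends on finitely many values of `v`, and, by fusing
applications of the Carlson–Simpson theorem, `w` can be chosen so that it depends only on the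
values of `v` before the first occurrence of the last class. Treating the remaining classes one at
a time from the top makes the colouring constant. -/

theorem exists_seq_of_forall_exists {α : Type*} {p : ℕ → α → Prop} {r : ℕ → α → α → Prop} {a : α}
    (ha : p 0 a) (h : ∀ n x, p n x → ∃ y, p (n + 1) y ∧ r n x y) :
    ∃ f : ℕ → α, ∀ n, p n (f n) ∧ r n (f n) (f (n + 1)) := by
  choose! g hg using h
  let f : ℕ → α := fun n => n.rec a g
  have hf : ∀ n, p n (f n) := fun n => n.rec ha fun n ih => (hg n _ ih).1
  exact ⟨f, fun n => ⟨hf n, (hg n _ (hf n)).2⟩⟩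

section CarlsonSimpson

attribute [local instance] Ultrafilter.mul Ultrafilter.semigroup

section LeftIdeal

variable {M : Type*} [Semigroup M] [TopologicalSpace M]

/-- Nonempty closed left ideals of a topological semigroup. -/
structure IsClosedLeftIdeal (N : Set M) : Prop where
  isClosed : IsClosed N
  nonempty : N.Nonempty
  mul_mem : ∀ x, ∀ y ∈ N, x * y ∈ N

theorem IsClosedLeftIdeal.sInter [CompactSpace M] {C : Set (Set M)} (hC : C.Nonempty)
    (hchain : IsChain (· ⊆ ·) C) (hideal : ∀ N ∈ C, IsClosedLeftIdeal N) :
    IsClosedLeftIdeal (⋂₀ C) where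
  isClosed := isClosed_sInter fun N hN => (hideal N hN).isClosed
  nonempty :=
    have := hC.to_subtype
    IsCompact.nonempty_sInter_of_directed_nonempty_isCompact_isClosed
      (fun N hN N' hN' => (hchain.total hN hN').elim (fun h => ⟨N, hN, subset_rfl, h⟩)
        fun h => ⟨N', hN', h, subset_rfl⟩)
      (fun N hN => (hideal N hN).nonempty)
      (fun N hN => (hideal N hN).isClosed.isCompact) fun N hN => (hideal N hN).isClosed
  mul_mem x y hy N hN := (hideal N hN).mul_mem x y (hy N hN)

theorem exists_minimal_isClosedLeftIdeal [CompactSpace M] [Nonempty M] :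
    ∃ N : Set M, Minimal IsClosedLeftIdeal N := by
  obtain ⟨N, -, hN⟩ := zorn_superset_nonempty {N : Set M | IsClosedLeftIdeal N}
    (fun C hC hchain hne => ⟨⋂₀ C, .sInter hne hchain hC, fun _ => sInter_subset_of_mem⟩) univ
    ⟨isClosed_univ, univ_nonempty, fun _ _ _ => mem_univ _⟩
  exact ⟨N, hN⟩

theorem mul_eq_left_of_minimal_isClosedLeftIdeal [CompactSpace M] [T2Space M]
    (hcont : ∀ x : M, Continuous (· * x)) {N : Set M} (hN : Minimal IsClosedLeftIdeal N) {e : M}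
    (he : e ∈ N) (hee : e * e = e) {x : M} (hx : x ∈ N) : x * e = x := by
  have hNe : IsClosedLeftIdeal ((· * e) '' N) :=
    { isClosed := (hcont e).isClosedMap _ hN.prop.isClosed
      nonempty := hN.prop.nonempty.image _
      mul_mem := by
        rintro x _ ⟨y, hy, rfl⟩
        exact ⟨x * y, hN.prop.mul_mem x y hy, mul_assoc x y e⟩ }
  obtain ⟨y, -, rfl⟩ : x ∈ (· * e) '' N :=
    hN.le_of_le hNe (image_subset_iff.2 fun y _ => hN.prop.mul_mem y e he) hx
  exact (mul_assoc y e e).trans (congrArg (y * ·) hee)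

end LeftIdeal

theorem ultrafilter_map_mul {M N : Type*} [Monoid M] [Monoid N] (f : M →* N)
    (U V : Ultrafilter M) : (U * V).map f = U.map f * V.map f := by
  refine Ultrafilter.coe_inj.1 (Filter.ext' fun p => ?_)
  simp only [Ultrafilter.eventually_mul, Ultrafilter.coe_map, Filter.eventually_map, map_mul]

theorem continuous_ultrafilter_map {α β : Type*} (f : α → β) :
    Continuous (Ultrafilter.map f) :=
  ultrafilterBasis_is_basis.continuous_iff.2 <|
    forall_mem_range.2 fun s => ultrafilter_isOpen_basic (f ⁻¹' s)

variable {B : Type*}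

/-- Substitution of the letter `a` for the variable `none` in a word over `Option B`. -/
def substVar (a : B) : FreeMonoid (Option B) →* FreeMonoid B :=
  FreeMonoid.map (·.getD a)

/-- Words over `Option B` that start with the variable `none`. -/
def leftVarWords (B : Type*) : Set (FreeMonoid (Option B)) :=
  range (FreeMonoid.of none * ·)

theorem mul_mem_leftVarWords {s : FreeMonoid (Option B)} (hs : s ∈ leftVarWords B)
    (t : FreeMonoid (Option B)) : s * t ∈ leftVarWords B := by
  obtain ⟨s, rfl⟩ := hs
  exact ⟨s * t, (mul_assoc _ s t).symm⟩

theorem exists_leftVarWords_mem_map_substVar_mem {N : Set (Ultrafilter (FreeMonoid B))}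
    (hN : IsClosedLeftIdeal N) :
    ∃ U : Ultrafilter (FreeMonoid (Option B)),
      leftVarWords B ∈ U ∧ ∀ a, U.map (substVar a) ∈ N := by
  obtain ⟨V, hV⟩ := hN.nonempty
  let ι : FreeMonoid B →* FreeMonoid (Option B) := FreeMonoid.map some
  refine ⟨pure (FreeMonoid.of none) * V.map ι, ?_, fun a => ?_⟩
  · refine (Ultrafilter.eventually_mul _ _ (· ∈ leftVarWords B)).2 ?_
    simp [leftVarWords]
  · have hι : substVar a ∘ ι = id := funext fun s => by
      simp only [substVar, ι, Function.comp_apply, FreeMonoid.map_map]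
      exact congrArg (· s) FreeMonoid.map_id
    rw [ultrafilter_map_mul, Ultrafilter.map_map, hι]
    exact hN.mul_mem _ _ hV

/- In a minimal left ideal `N` every idempotent is a right identity. An idempotent ultrafilter of
variable words all of whose substitution instances lie in `N` therefore has the required
property. -/
theorem exists_ultrafilter_map_substVar_mul (B : Type*) :
    ∃ U : Ultrafilter (FreeMonoid (Option B)), leftVarWords B ∈ U ∧
      ∀ a b, U.map (substVar a) * U.map (substVar b) = U.map (substVar a) := by
  obtain ⟨N, hN⟩ := exists_minimal_isClosedLeftIdeal (M := Ultrafilter (FreeMonoid B))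
  let T : Set (Ultrafilter (FreeMonoid (Option B))) :=
    {U | leftVarWords B ∈ U ∧ ∀ a, U.map (substVar a) ∈ N}
  have hTclosed : IsClosed T := by
    have hT : T = {U | leftVarWords B ∈ U} ∩ ⋂ a, Ultrafilter.map (substVar a) ⁻¹' N := by
      ext U
      simp [T]
    rw [hT]
    exact (ultrafilter_isClosed_basic _).inter <|
      isClosed_iInter fun a => hN.prop.isClosed.preimage (continuous_ultrafilter_map _)
  have hTmul : ∀ U ∈ T, ∀ V ∈ T, U * V ∈ T := by
    refine fun U hU V hV => ⟨?_, fun a => ?_⟩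
    · refine (Ultrafilter.eventually_mul U V (· ∈ leftVarWords B)).2 ?_
      filter_upwards [hU.1] with s hs using .of_forall (mul_mem_leftVarWords hs)
    · rw [ultrafilter_map_mul]
      exact hN.prop.mul_mem _ _ (hV.2 a)
  obtain ⟨U, hU, hUU⟩ := exists_idempotent_in_compact_subsemigroup
    Ultrafilter.continuous_mul_left T (exists_leftVarWords_mem_map_substVar_mem hN.prop)
    hTclosed.isCompact hTmul
  refine ⟨U, hU.1, fun a b => mul_eq_left_of_minimal_isClosedLeftIdeal
    Ultrafilter.continuous_mul_left hN (hU.2 b) ?_ (hU.2 a)⟩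
  rw [← ultrafilter_map_mul, hUU]

variable {κ : Type*} [Finite κ]

theorem exists_set_forall_append_substVar_mem [Finite B] [Nonempty B] (χ : FreeMonoid B → κ) :
    ∃ (i : κ) (P : Set (FreeMonoid B)), P.Nonempty ∧ (∀ s ∈ P, χ s = i) ∧
      ∀ A ⊆ P, A.Finite → ∃ t ∈ leftVarWords B, ∀ s ∈ A, ∀ a, s * substVar a t ∈ P := by
  obtain ⟨U, hUvar, hU⟩ := exists_ultrafilter_map_substVar_mul B
  obtain ⟨b⟩ := ‹Nonempty B›
  obtain ⟨i, hi⟩ : ∃ i, ∀ᶠ t in (U : Filter (FreeMonoid (Option B))), χ (substVar b t) = i :=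
    Ultrafilter.eventually_exists_iff.1 (.of_forall fun t => ⟨_, rfl⟩)
  let P : Set (FreeMonoid B) :=
    {s | χ s = i ∧ ∀ a, ∀ᶠ t in (U : Filter _), χ (s * substVar a t) = i}
  have hmul (a a' : B) (p : FreeMonoid B → Prop) (h : ∀ᶠ t in (U : Filter _), p (substVar a t)) :
      ∀ᶠ t in (U : Filter _), ∀ᶠ t' in (U : Filter _), p (substVar a t * substVar a' t') := by
    have h' : ∀ᶠ t in (U.map (substVar a) : Filter _), p t := h
    rwa [← hU a a', Ultrafilter.eventually_mul] at h'
  have hmem {s : FreeMonoid B} {a : B} (hs : ∀ᶠ t in (U : Filter _), χ (s * substVar a t) = i) :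
      ∀ᶠ t in (U : Filter _), s * substVar a t ∈ P := by
    refine hs.and (Filter.eventually_all.2 fun a' => ?_)
    simpa only [mul_assoc] using hmul a a' (fun x => χ (s * x) = i) hs
  refine ⟨i, P, ?_, fun s hs => hs.1, fun A hAP hA => ?_⟩
  · obtain ⟨t, ht⟩ := (hmem (s := 1) (by simpa using hi)).exists
    exact ⟨_, ht⟩
  · have hA' : ∀ᶠ t in (U : Filter _), ∀ s ∈ A, ∀ a, s * substVar a t ∈ P :=
      (Filter.eventually_all_finite hA).2 fun s hs =>
        Filter.eventually_all.2 fun a => hmem ((hAP hs).2 a)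
    exact (hA'.and hUvar).exists.imp fun t ht => ⟨ht.2, ht.1⟩

end CarlsonSimpson

/-- Infinite words over the alphabet `B` with variables `x₀, x₁, …`, the letter `Sum.inr m` standing
for `x_m`: every variable occurs, and `pos m` is the first occurrence of `x_m`, which precedes all
occurrences of `x_{m+1}, x_{m+2}, …`. -/
structure VarWord (B : Type*) where
  letter : ℕ → B ⊕ ℕ
  pos : ℕ → ℕ
  letter_pos : ∀ m, letter (pos m) = Sum.inr m
  lt_of_lt_pos : ∀ m p m', p < pos m → letter p = Sum.inr m' → m' < m

/-- The finite word obtained from the part of `T` before the first occurrence of `x_m` by replacing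
each variable `x_i` with the letter `β i`. -/
def VarWord.subst {B : Type*} (T : VarWord B) (β : ℕ → B) (m : ℕ) : List B :=
  (List.range (T.pos m)).map fun p => Sum.elim id β (T.letter p)

theorem exists_map_range_eq_of_prefix {α : Type*} {L : ℕ → List α} (hpre : ∀ n, L n <+: L (n + 1))
    (hlen : ∀ n, (L n).length < (L (n + 1)).length) :
    ∃ T : ℕ → α, ∀ n, (List.range (L n).length).map T = L n := by
  have hmono : ∀ {m n}, m ≤ n → L m <+: L n := fun h =>
    Nat.le_induction List.prefix_rfl (fun n _ ih => ih.trans (hpre n)) _ h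
  have hlt (p : ℕ) : p < (L (p + 1)).length :=
    ((strictMono_nat_of_lt_succ (f := fun n => (L n).length) hlen).le_apply (x := p)).trans_lt
      (hlen p)
  refine ⟨fun p => (L (p + 1))[p]'(hlt p), fun n => List.ext_getElem (by simp) fun p _ hp => ?_⟩
  rw [List.getElem_map, List.getElem_range]
  rcases le_total n (p + 1) with h | h
  · exact ((hmono h).getElem hp).symm
  · exact (hmono h).getElem (hlt p)

theorem exists_varWord_prefixes {B : Type*} {P : ℕ → List (B ⊕ ℕ) → Prop} {s : List (B ⊕ ℕ)}
    (hs : P 0 s) (hvar : ∀ m L, P m L → ∀ m', Sum.inr m' ∈ L → m' < m)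
    (h : ∀ m L, P m L → ∃ t, P (m + 1) (L ++ Sum.inr m :: t)) :
    ∃ T : VarWord B, ∀ m, P m ((List.range (T.pos m)).map T.letter) := by
  obtain ⟨L, hL⟩ := exists_seq_of_forall_exists
    (r := fun m L L' => ∃ t, L' = L ++ Sum.inr m :: t) hs fun m L hm =>
      (h m L hm).elim fun t ht => ⟨_, ht, t, rfl⟩
  have hsucc (m : ℕ) : ∃ t, L (m + 1) = L m ++ Sum.inr m :: t := (hL m).2
  obtain ⟨T, hT⟩ := exists_map_range_eq_of_prefix (L := L)
    (fun m => (hsucc m).elim fun t ht => ht ▸ List.prefix_append _ _)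
    (fun m => (hsucc m).elim fun t ht => by simp [ht])
  have hpos (m : ℕ) : T (L m).length = Sum.inr m := by
    obtain ⟨t, ht⟩ := hsucc m
    have := congrArg (·[(L m).length]?) (hT (m + 1))
    simpa [ht] using this
  refine ⟨⟨T, fun m => (L m).length, hpos, fun m p m' hp hTp => hvar m _ (hL m).1 m' ?_⟩,
    fun m => (hT m).symm ▸ (hL m).1⟩
  rw [← hT m, ← hTp]
  exact List.mem_map_of_mem (List.mem_range.2 hp)

theorem carlsonSimpson {B κ : Type*} [Finite B] [Nonempty B] [Finite κ] (χ : List B → κ) :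
    ∃ (T : VarWord B) (i : κ), ∀ β m, χ (T.subst β m) = i := by
  obtain ⟨i, P, ⟨s, hs⟩, hPi, hP⟩ := exists_set_forall_append_substVar_mem (B := B)
    fun s => χ s.toList
  let Q (m : ℕ) (L : List (B ⊕ ℕ)) : Prop := (∀ m', Sum.inr m' ∈ L → m' < m) ∧
    ∀ β : ℕ → B, FreeMonoid.ofList (L.map (Sum.elim id β)) ∈ P
  suffices hQ : ∀ m L, Q m L → ∃ t, Q (m + 1) (L ++ Sum.inr m :: t) by
    obtain ⟨T, hT⟩ := exists_varWord_prefixes (P := Q) (s := s.toList.map Sum.inl)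
      ⟨by simp, by simpa using hs⟩ (fun m L hL => hL.1) hQ
    refine ⟨T, i, fun β m => ?_⟩
    simpa [VarWord.subst, Function.comp_def] using hPi _ ((hT m).2 β)
  rintro m L ⟨hvar, hL⟩
  have hfin : (range fun β : ℕ → B => FreeMonoid.ofList (L.map (Sum.elim id β))).Finite :=
    (List.finite_length_eq B L.length).subset (range_subset_iff.2 fun β => by
      change (L.map _).length = _
      exact List.length_map _)
  obtain ⟨_, ⟨t, rfl⟩, ht⟩ := hP _ (range_subset_iff.2 hL) hfin
  refine ⟨t.toList.map (·.elim (Sum.inr m) Sum.inl), fun m' hm' => ?_, fun β => ?_⟩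
  · simp only [List.mem_append, List.mem_cons, List.mem_map] at hm'
    rcases hm' with h | h | ⟨o, -, ho⟩
    · exact (hvar m' h).trans (Nat.lt_succ_self m)
    · cases h; exact Nat.lt_succ_self m
    · cases o <;> cases ho
      exact Nat.lt_succ_self m
  · convert ht _ (mem_range_self β) (β m) using 1
    have hletter : Sum.elim id β ∘ (·.elim (Sum.inr m) Sum.inl) =
        fun o : Option B => o.getD (β m) :=
      funext fun o => by cases o <;> rfl
    simp only [List.map_append, List.map_cons, List.map_map, hletter]
    rfl

section RigidSurjections

/-- `n` is the first argument at which `f` takes the value `j`, and all earlier values are smaller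
than `j`. -/
def IsFirst (f : ℕ → ℕ) (j n : ℕ) : Prop := f n = j ∧ ∀ m < n, f m < j

namespace IsFirst

variable {f g : ℕ → ℕ} {j m n : ℕ}

theorem lt_of_lt {i : ℕ} (hm : IsFirst f i m) (hn : IsFirst f j n) (h : i < j) : m < n := by
  by_contra! hnm
  rcases hnm.eq_or_lt with rfl | hnm
  · exact h.ne (hm.1.symm.trans hn.1)
  · exact (hm.2 n hnm).not_gt (hn.1.symm ▸ h)

theorem le_of_apply_eq (hn : IsFirst f j n) (hm : f m = j) : n ≤ m :=
  not_lt.1 fun h => (hn.2 m h).ne hm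

theorem congr (hn : IsFirst f j n) (h : EqOn g f (Iic n)) : IsFirst g j n :=
  ⟨(h self_mem_Iic).trans hn.1, fun m hm => (h hm.le).trans_lt (hn.2 m hm)⟩

theorem comp (hm : IsFirst f j m) (hn : IsFirst g m n) : IsFirst (f ∘ g) j n :=
  ⟨(congrArg f hn.1).trans hm.1, fun i hi => hm.2 _ (hn.2 i hi)⟩

theorem of_eqOn_id (h : EqOn g id (Iic j)) : IsFirst g j j :=
  ⟨h self_mem_Iic, fun _ hm => (h hm.le).trans_lt hm⟩

end IsFirst

/-- Surjections from `ω` onto `K ≤ ω` for which the first occurrences of `0, 1, 2, …` come in this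
order, with `j` first occurring at an argument congruent to `j` modulo `l`, and which do not
increase residues modulo `l`. Up to the identification of `ω·l` with `ω`, the fibres of such a
surjection are the classes of an element of `𝓔_∞(ω·l)` if `K = ⊤` and of `𝓔_k(ω·l)` if `K = k`. -/
structure RigidSurj (l : ℕ) (K : ℕ∞) where
  toFun : ℕ → ℕ
  mod_le' : ∀ n, toFun n % l ≤ n % l
  lt' : ∀ n, (toFun n : ℕ∞) < K
  exists_isFirst' : ∀ j : ℕ, (j : ℕ∞) < K → ∃ n, IsFirst toFun j n ∧ n % l = j % l

namespace RigidSurj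

variable {l : ℕ} {K : ℕ∞}

instance : FunLike (RigidSurj l K) ℕ ℕ where
  coe := toFun
  coe_injective := fun v w h => by cases v; cases w; congr

@[ext]
theorem ext {v w : RigidSurj l K} (h : ∀ n, v n = w n) : v = w := DFunLike.ext v w h

theorem mod_le (v : RigidSurj l K) (n : ℕ) : v n % l ≤ n % l := v.mod_le' n

theorem coe_lt (v : RigidSurj l K) (n : ℕ) : (v n : ℕ∞) < K := v.lt' n

theorem exists_isFirst (v : RigidSurj l K) {j : ℕ} (hj : (j : ℕ∞) < K) :
    ∃ n, IsFirst v j n ∧ n % l = j % l :=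
  v.exists_isFirst' j hj

/-- The first argument at which `v` takes the value `j`. -/
noncomputable def first (v : RigidSurj l K) (j : ℕ) : ℕ := sInf (v ⁻¹' {j})

theorem first_eq (v : RigidSurj l K) {j n : ℕ} (h : IsFirst v j n) : v.first j = n :=
  (IsLeast.csInf_eq ⟨h.1, fun _ => h.le_of_apply_eq⟩ : sInf (v ⁻¹' {j}) = n)

theorem isFirst_first (v : RigidSurj l K) {j : ℕ} (hj : (j : ℕ∞) < K) :
    IsFirst v j (v.first j) := by
  obtain ⟨n, hn, -⟩ := v.exists_isFirst hj
  rwa [v.first_eq hn]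

theorem apply_first (v : RigidSurj l K) {j : ℕ} (hj : (j : ℕ∞) < K) : v (v.first j) = j :=
  (v.isFirst_first hj).1

theorem first_mod (v : RigidSurj l K) {j : ℕ} (hj : (j : ℕ∞) < K) : v.first j % l = j % l := by
  obtain ⟨n, hn, hmod⟩ := v.exists_isFirst hj
  rwa [v.first_eq hn]

theorem first_apply_le (v : RigidSurj l K) (n : ℕ) : v.first (v n) ≤ n :=
  (v.isFirst_first (v.coe_lt n)).le_of_apply_eq rfl

theorem mod_eq_of_isFirst (v : RigidSurj l K) {j n : ℕ} (h : IsFirst v j n) : n % l = j % l := by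
  rw [← v.first_eq h, v.first_mod (h.1 ▸ v.coe_lt n)]

theorem le_first (v : RigidSurj l K) {j : ℕ} (hj : (j : ℕ∞) < K) : j ≤ v.first j := by
  induction j with
  | zero => exact Nat.zero_le _
  | succ j ih =>
    have hj' : (j : ℕ∞) < K := lt_of_le_of_lt (by simp) hj
    exact (ih hj').trans_lt ((v.isFirst_first hj').lt_of_lt (v.isFirst_first hj) j.lt_succ_self)

theorem apply_le (v : RigidSurj l K) (n : ℕ) : v n ≤ n :=
  (v.le_first (v.coe_lt n)).trans (v.first_apply_le n)

theorem isFirst_zero (v : RigidSurj l K) : IsFirst v 0 0 :=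
  ⟨Nat.le_zero.1 (v.apply_le 0), fun _ h => absurd h (Nat.not_lt_zero _)⟩

/-- The identity of `ω`. -/
protected def id (l : ℕ) : RigidSurj l ⊤ where
  toFun := id
  mod_le' _ := le_rfl
  lt' := ENat.natCast_lt_top
  exists_isFirst' j _ := ⟨j, .of_eqOn_id fun _ _ => rfl, rfl⟩

/-- Composition of maps. In terms of equivalence relations, `v.comp w` runs through the coarsenings
of `w`. -/
def comp (v : RigidSurj l K) (w : RigidSurj l ⊤) : RigidSurj l K where
  toFun := v ∘ w
  mod_le' n := (v.mod_le _).trans (w.mod_le n)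
  lt' n := v.coe_lt _
  exists_isFirst' j hj := by
    obtain ⟨n, hn, hmod⟩ := v.exists_isFirst hj
    exact ⟨w.first n, hn.comp (w.isFirst_first (ENat.natCast_lt_top n)),
      (w.first_mod (ENat.natCast_lt_top n)).trans hmod⟩

@[simp]
theorem comp_apply (v : RigidSurj l K) (w : RigidSurj l ⊤) (n : ℕ) : v.comp w n = v (w n) := rfl

theorem comp_assoc (u : RigidSurj l K) (v w : RigidSurj l ⊤) :
    (u.comp v).comp w = u.comp (v.comp w) := rfl

theorem exists_eq_comp_of_factorsThrough {v : RigidSurj l K} {w : RigidSurj l ⊤}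
    (h : Function.FactorsThrough v w) : ∃ u : RigidSurj l K, v = u.comp w := by
  have hw (n : ℕ) : w (w.first n) = n := w.apply_first (ENat.natCast_lt_top n)
  have hv (n : ℕ) : v (w.first (w n)) = v n := h (hw (w n))
  refine ⟨⟨fun n => v (w.first n), fun n => ?_, fun n => v.coe_lt _, fun j hj => ?_⟩,
    ext fun n => (hv n).symm⟩
  · exact (v.mod_le _).trans (w.first_mod (ENat.natCast_lt_top n)).le
  · have hfirst := v.isFirst_first hj
    have hj' : v (w.first (w (v.first j))) = j := (hv _).trans hfirst.1
    refine ⟨w (v.first j), ⟨hj', fun n hn => hfirst.2 _ ?_⟩, le_antisymm ?_ ?_⟩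
    · by_contra! hle
      rcases hle.eq_or_lt with heq | hlt
      · exact hn.ne (by rw [heq, hw])
      · exact hn.not_gt ((w.isFirst_first (ENat.natCast_lt_top n)).2 _ hlt)
    · exact (w.mod_le _).trans (v.first_mod hj).le
    · calc j % l = v (w.first (w (v.first j))) % l := by rw [hj']
        _ ≤ w.first (w (v.first j)) % l := v.mod_le _
        _ = w (v.first j) % l := w.first_mod (ENat.natCast_lt_top _)

/-- `w'` is a coarsening of `w` that keeps the first `n + 1` classes of `w` apart. -/
def Refines (n : ℕ) (w' w : RigidSurj l ⊤) : Prop :=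
  ∃ g : RigidSurj l ⊤, EqOn g id (Iic n) ∧ w' = g.comp w

namespace Refines

variable {m n : ℕ} {w w' w'' : RigidSurj l ⊤}

theorem refl (n : ℕ) (w : RigidSurj l ⊤) : Refines n w w :=
  ⟨.id l, fun _ _ => rfl, rfl⟩

theorem trans (h : Refines n w'' w') (h' : Refines n w' w) : Refines n w'' w := by
  obtain ⟨g, hg, rfl⟩ := h
  obtain ⟨g', hg', rfl⟩ := h'
  exact ⟨g.comp g', fun i hi => (congrArg g (hg' hi)).trans (hg hi), rfl⟩

theorem mono (hmn : m ≤ n) (h : Refines n w' w) : Refines m w' w :=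
  h.imp fun _ hg => ⟨hg.1.mono (Iic_subset_Iic.2 hmn), hg.2⟩

theorem isFirst (h : Refines n w' w) (hw : IsFirst w n m) : IsFirst w' n m := by
  obtain ⟨g, hg, rfl⟩ := h
  exact (IsFirst.of_eqOn_id hg).comp hw

theorem eqOn (h : Refines n w' w) : EqOn w' w (Iic n) := by
  obtain ⟨g, hg, rfl⟩ := h
  exact fun i hi => hg ((w.apply_le i).trans hi)

end Refines

/- The fusion is the diagonal `x ↦ w x x`: it agrees with `w m` up to `m`, for every `m`. -/
theorem exists_fusion {w : ℕ → RigidSurj l ⊤} (hw : ∀ n, Refines n (w (n + 1)) (w n)) :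
    ∃ W : RigidSurj l ⊤, ∀ n, Refines n W (w n) := by
  have hmono {n m : ℕ} (h : n ≤ m) : Refines n (w m) (w n) :=
    Nat.le_induction (.refl n _) (fun m hm ih => ((hw m).mono hm).trans ih) m h
  have hdiag {x m : ℕ} (h : x ≤ m) : w m x = w x x := (hmono h).eqOn self_mem_Iic
  let W : RigidSurj l ⊤ :=
    { toFun := fun x => w x x
      mod_le' := fun x => (w x).mod_le x
      lt' := fun x => (w x).coe_lt x
      exists_isFirst' := fun j hj => by
        obtain ⟨n, hn, hmod⟩ := (w j).exists_isFirst hj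
        have hjn : j ≤ n := ((w j).le_first hj).trans_eq ((w j).first_eq hn)
        exact ⟨n, ((hmono hjn).isFirst hn).congr fun x hx => (hdiag hx).symm, hmod⟩ }
  have hW {m : ℕ} : EqOn W (w m) (Iic m) := fun x hx => (hdiag hx).symm
  refine ⟨W, fun n => ?_⟩
  obtain ⟨g, hg⟩ : ∃ g : RigidSurj l ⊤, W = g.comp (w n) := by
    refine exists_eq_comp_of_factorsThrough fun a b hab => ?_
    obtain ⟨g, -, hg⟩ := hmono (le_max_left n (max a b))
    rw [hW (m := max n (max a b)) (by simp), hW (m := max n (max a b)) (by simp), hg]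
    exact congrArg g hab
  refine ⟨g, fun i hi => ?_, hg⟩
  obtain ⟨g', hg', hgw⟩ := hmono (le_max_left n ((w n).first i))
  have hi' := (w n).apply_first (ENat.natCast_lt_top i)
  calc g i = W ((w n).first i) := by rw [hg, comp_apply, hi']
    _ = g' (w n ((w n).first i)) := by rw [hW (mem_Iic.2 (le_max_right n _)), hgw, comp_apply]
    _ = i := by rw [hi', hg' hi, id]

section Topology

/-- The topology of pointwise convergence. -/
instance : TopologicalSpace (RigidSurj l K) :=
  .induced (fun v : RigidSurj l K => (v : ℕ → ℕ)) inferInstance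

theorem isEmbedding_coe : Topology.IsEmbedding fun v : RigidSurj l K => (v : ℕ → ℕ) :=
  ⟨⟨rfl⟩, DFunLike.coe_injective⟩

instance : SecondCountableTopology (RigidSurj l K) :=
  isEmbedding_coe.secondCountableTopology

theorem continuous_apply (n : ℕ) : Continuous fun v : RigidSurj l K => v n :=
  (_root_.continuous_apply n).comp isEmbedding_coe.continuous

theorem continuous_comp_right (w : RigidSurj l ⊤) :
    Continuous fun v : RigidSurj l K => v.comp w :=
  isEmbedding_coe.continuous_iff.2 <| continuous_pi fun n => continuous_apply (w n)

theorem isOpen_setOf_eqOn (f : ℕ → ℕ) (n : ℕ) :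
    IsOpen {v : RigidSurj l K | EqOn v f (Iic n)} := by
  have h : {v : RigidSurj l K | EqOn v f (Iic n)} = ⋂ i ∈ Iic n, (fun v => v i) ⁻¹' {f i} := by
    ext v
    simp [EqOn]
  rw [h]
  exact (finite_Iic n).isOpen_biInter fun i _ => (isOpen_discrete _).preimage (continuous_apply i)

theorem hasBasis_nhds (v : RigidSurj l K) :
    (nhds v).HasBasis (fun _ : ℕ => True) fun n => {v' | EqOn v' v (Iic n)} := by
  refine ⟨fun U => ⟨fun hU => ?_, fun h => h.elim fun n hn =>
    Filter.mem_of_superset ((isOpen_setOf_eqOn v n).mem_nhds fun _ _ => rfl) hn.2⟩⟩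
  obtain ⟨W, hW, hWU⟩ := isEmbedding_coe.isInducing.nhds_eq_comap v ▸ hU
  obtain ⟨I, u, hu, huW⟩ := isOpen_pi_iff.1 isOpen_interior v (mem_interior_iff_mem_nhds.2 hW)
  refine ⟨I.sup id, trivial, fun v' hv' =>
    hWU (mem_preimage.2 (interior_subset (huW fun i hi => ?_)))⟩
  have hvi : v' i = v i := hv' (mem_Iic.2 (Finset.le_sup (f := id) hi))
  exact hvi ▸ (hu i hi).2

theorem baireSpace_of_isGδ {X : Type*} [TopologicalSpace X]
    [TopologicalSpace.IsCompletelyMetrizableSpace X] {s : Set X} (hs : IsGδ s) : BaireSpace s := by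
  have := (isClosed_closure (s := s)).isCompletelyMetrizableSpace
  let ι : s → closure s := inclusion subset_closure
  have hGδ : IsGδ (range ι) := by
    rw [range_inclusion]
    exact hs.preimage continuous_subtype_val
  have := hGδ.baireSpace_of_dense ((denseRange_inclusion_iff subset_closure).2 subset_rfl)
  exact (Topology.IsEmbedding.inclusion subset_closure).toHomeomorph.symm.baireSpace

theorem isGδ_range_coe : IsGδ (range fun v : RigidSurj l K => (v : ℕ → ℕ)) := by
  have h : (range fun v : RigidSurj l K => (v : ℕ → ℕ)) =
      (⋂ n, {f : ℕ → ℕ | f n % l ≤ n % l ∧ (f n : ℕ∞) < K}) ∩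
        ⋂ (j : ℕ) (_ : (j : ℕ∞) < K), ⋃ (n : ℕ) (_ : n % l = j % l),
          {f | f n = j} ∩ ⋂ m ∈ Iio n, {f | f m < j} := by
    ext f
    simp only [mem_range, mem_inter_iff, mem_iInter, mem_iUnion, mem_ofPred_eq]
    constructor
    · rintro ⟨v, rfl⟩
      refine ⟨fun n => ⟨v.mod_le n, v.coe_lt n⟩, fun j hj => ?_⟩
      obtain ⟨n, hn, hmod⟩ := v.exists_isFirst hj
      exact ⟨n, hmod, hn⟩
    · rintro ⟨h, hfirst⟩
      refine ⟨⟨f, fun n => (h n).1, fun n => (h n).2, fun j hj => ?_⟩, rfl⟩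
      obtain ⟨n, hmod, hn⟩ := hfirst j hj
      exact ⟨n, hn, hmod⟩
  have hopen (n : ℕ) (p : ℕ → Prop) : IsOpen {f : ℕ → ℕ | p (f n)} :=
    (isOpen_discrete {x | p x}).preimage (_root_.continuous_apply n)
  rw [h]
  refine .inter (.iInter fun n => (hopen n fun x => x % l ≤ n % l ∧ (x : ℕ∞) < K).isGδ)
    (.iInter fun j => .iInter fun _ => IsOpen.isGδ ?_)
  exact isOpen_iUnion fun n => isOpen_iUnion fun _ =>
    (hopen n (· = j)).inter ((finite_Iio n).isOpen_biInter fun m _ => hopen m (· < j))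

instance : BaireSpace (RigidSurj l K) :=
  have := baireSpace_of_isGδ (isGδ_range_coe (l := l) (K := K))
  isEmbedding_coe.toHomeomorph.symm.baireSpace

end Topology

section Blocks

variable {n : ℕ}

/-- Patterns of length `l` that a rigid surjection may copy from `{0, …, n}` into the interval
`[n + 1 + l * Q, n + 1 + l * (Q + 1))`, for any `Q`, without increasing residues modulo `l`. -/
abbrev Block (l n : ℕ) : Type :=
  {b : Fin l → Fin (n + 1) // ∀ R, (b R : ℕ) % l ≤ (n + 1 + R) % l}

instance : Nonempty (Block l n) := ⟨fun _ => 0, fun _ => by simp⟩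

theorem block_mod (n Q R : ℕ) : (n + 1 + l * Q + R) % l = (n + 1 + R) % l := by
  rw [add_right_comm, Nat.add_mul_mod_self_left]

theorem le_or_exists_eq_block (hl : 0 < l) (n p : ℕ) :
    p ≤ n ∨ ∃ (Q : ℕ) (R : Fin l), p = n + 1 + l * Q + R := by
  refine (le_or_gt p n).imp_right fun h => ?_
  refine ⟨(p - (n + 1)) / l, ⟨(p - (n + 1)) % l, Nat.mod_lt _ hl⟩, ?_⟩
  have := Nat.div_add_mod (p - (n + 1)) l
  simp only
  omega

theorem block_lt_block_iff {Q Q' : ℕ} {R R' : Fin l} :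
    n + 1 + l * Q + R < n + 1 + l * Q' + R' ↔ Q < Q' ∨ Q = Q' ∧ R < R' := by
  have hlt {Q Q' : ℕ} (h : Q < Q') : l * Q + l ≤ l * Q' := Nat.mul_le_mul_left l h
  rcases lt_trichotomy Q Q' with h | rfl | h
  · have := hlt h
    simp only [h, true_or, iff_true]
    omega
  · simp
  · have := hlt h
    simp only [h.not_gt, h.ne', false_and, or_self, iff_false]
    omega

/-- The map that fixes `{0, …, n}` and sends the interval `[n + 1 + l * Q, n + 1 + l * (Q + 1))`
into `{0, …, n}` according to the `Q`-th letter of `T` if that is a block, and onto the interval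
`[n + 1 + l * m, n + 1 + l * (m + 1))` if it is the variable `x_m`. -/
def blockMap (hl : 0 < l) (T : VarWord (Block l n)) (p : ℕ) : ℕ :=
  if p ≤ n then p else
    Sum.elim (fun b : Block l n => (b.1 ⟨(p - (n + 1)) % l, Nat.mod_lt _ hl⟩ : ℕ))
      (fun m => n + 1 + l * m + (p - (n + 1)) % l) (T.letter ((p - (n + 1)) / l))

section BlockMap

variable (hl : 0 < l) (T : VarWord (Block l n))

theorem blockMap_of_le {p : ℕ} (hp : p ≤ n) : blockMap hl T p = p := if_pos hp

theorem blockMap_block (Q : ℕ) (R : Fin l) : blockMap hl T (n + 1 + l * Q + R) =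
    Sum.elim (fun b : Block l n => (b.1 R : ℕ)) (fun m => n + 1 + l * m + R) (T.letter Q) := by
  have hsub : n + 1 + l * Q + R - (n + 1) = R + l * Q := by omega
  have hdiv : (R + l * Q) / l = Q := by
    rw [Nat.add_mul_div_left _ _ hl, Nat.div_eq_of_lt R.2, zero_add]
  have hmod : (R + l * Q) % l = R := by rw [Nat.add_mul_mod_self_left, Nat.mod_eq_of_lt R.2]
  rw [blockMap, if_neg (by omega)]
  simp only [hsub, hdiv, hmod]

theorem blockMap_mod_le (p : ℕ) : blockMap hl T p % l ≤ p % l := by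
  obtain hp | ⟨Q, R, rfl⟩ := le_or_exists_eq_block hl n p
  · rw [blockMap_of_le hl T hp]
  · rw [blockMap_block, block_mod]
    cases T.letter Q with
    | inl b => exact b.2 R
    | inr m => exact (block_mod n m R).le

theorem isFirst_blockMap_of_le {j : ℕ} (hj : j ≤ n) : IsFirst (blockMap hl T) j j :=
  .of_eqOn_id fun _ hi => blockMap_of_le hl T (le_trans hi hj)

theorem isFirst_blockMap_block (m : ℕ) (R : Fin l) :
    IsFirst (blockMap hl T) (n + 1 + l * m + R) (n + 1 + l * T.pos m + R) := by
  refine ⟨by rw [blockMap_block, T.letter_pos, Sum.elim_inr], fun p hp => ?_⟩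
  obtain hpn | ⟨Q, R', rfl⟩ := le_or_exists_eq_block hl n p
  · rw [blockMap_of_le hl T hpn]
    omega
  rw [blockMap_block]
  rcases block_lt_block_iff.1 hp with hQ | ⟨rfl, hR⟩
  · cases hT : T.letter Q with
    | inl b =>
      rw [Sum.elim_inl]
      omega
    | inr m' => exact block_lt_block_iff.2 (.inl (T.lt_of_lt_pos _ _ _ hQ hT))
  · rw [T.letter_pos]
    exact block_lt_block_iff.2 (.inr ⟨rfl, hR⟩)

/-- The rigid surjection given by `blockMap`. -/
def ofVarWord : RigidSurj l ⊤ where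
  toFun := blockMap hl T
  mod_le' := blockMap_mod_le hl T
  lt' _ := ENat.natCast_lt_top _
  exists_isFirst' j _ := by
    obtain hj | ⟨m, R, rfl⟩ := le_or_exists_eq_block hl n j
    · exact ⟨j, isFirst_blockMap_of_le hl T hj, rfl⟩
    · exact ⟨_, isFirst_blockMap_block hl T m R, by rw [block_mod, block_mod]⟩

theorem eqOn_ofVarWord_id : EqOn (ofVarWord hl T) id (Iic n) := fun _ => blockMap_of_le hl T

theorem ofVarWord_block (Q : ℕ) (R : Fin l) : ofVarWord hl T (n + 1 + l * Q + R) =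
    Sum.elim (fun b : Block l n => (b.1 R : ℕ)) (fun m => n + 1 + l * m + R) (T.letter Q) :=
  blockMap_block hl T Q R

theorem isFirst_ofVarWord (m : ℕ) :
    IsFirst (ofVarWord hl T) (n + 1 + l * m) (n + 1 + l * T.pos m) :=
  isFirst_blockMap_block hl T m ⟨0, hl⟩

end BlockMap

/-- The block that copies the values of `z` on `[n + 1 + l * Q, n + 1 + l * (Q + 1))` from their
first occurrences. -/
noncomputable def copyBlock (z : RigidSurj l K) (Q : ℕ)
    (hz : ∀ R : Fin l, z.first (z (n + 1 + l * Q + R)) ≤ n) : Block l n :=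
  ⟨fun R => ⟨z.first (z (n + 1 + l * Q + R)), Nat.lt_succ_of_le (hz R)⟩, fun R =>
    (z.first_mod (z.coe_lt _)).trans_le ((z.mod_le _).trans_eq (block_mod n Q R))⟩

theorem apply_copyBlock (z : RigidSurj l K) (Q : ℕ)
    (hz : ∀ R : Fin l, z.first (z (n + 1 + l * Q + R)) ≤ n) (R : Fin l) :
    z ((copyBlock z Q hz).1 R) = z (n + 1 + l * Q + R) :=
  z.apply_first (z.coe_lt _)

end Blocks

section LocalHomogeneity

variable {j n : ℕ}

theorem first_le_of_isFirst (v : RigidSurj l K) (h : IsFirst v j n) {i : ℕ} (hi : i ≤ j) :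
    v.first i ≤ n := by
  have hj : (j : ℕ∞) < K := h.1 ▸ v.coe_lt n
  rcases hi.eq_or_lt with rfl | hi
  · exact (v.first_eq h).le
  · exact ((v.isFirst_first ((Nat.cast_lt.2 hi).trans hj)).lt_of_lt h hi).le

theorem exists_isFirst_succ (v : RigidSurj l K) (h : IsFirst v j n)
    (hj : ((j + 1 : ℕ) : ℕ∞) < K) : ∃ m, IsFirst v (j + 1) (n + 1 + l * m) := by
  obtain ⟨q, hq, hmod⟩ := v.exists_isFirst hj
  have hqn : n + 1 ≤ q := h.lt_of_lt hq j.lt_succ_self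
  have hdvd : l ∣ q - (n + 1) :=
    (Nat.modEq_iff_dvd' hqn).1 ((Nat.ModEq.add_right 1 (v.mod_eq_of_isFirst h)).trans hmod.symm)
  obtain ⟨m, hm⟩ := hdvd
  exact ⟨m, by rwa [← hm, Nat.add_sub_cancel' hqn]⟩

/-- The values of `v` up to the first occurrence of `j + 1` are those of `v₀` up to `n`, followed by
values of `v₀` copied according to the word `s` of blocks. -/
def Encodes (v₀ : RigidSurj l K) (j : ℕ) (s : List (Block l n)) (v : RigidSurj l K) : Prop :=
  EqOn v v₀ (Iic n) ∧ IsFirst v (j + 1) (n + 1 + l * s.length) ∧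
    ∀ (Q : ℕ) (hQ : Q < s.length) (R : Fin l), v (n + 1 + l * Q + R) = v₀ (s[Q].1 R)

theorem Encodes.eqOn (hl : 0 < l) {v₀ v v' : RigidSurj l K} {s : List (Block l n)}
    (h : Encodes v₀ j s v) (h' : Encodes v₀ j s v') :
    EqOn v' v (Iic (n + 1 + l * s.length)) := by
  intro p hp
  obtain hpn | ⟨Q, R, rfl⟩ := le_or_exists_eq_block hl n p
  · rw [h.1 hpn, h'.1 hpn]
  rcases lt_or_ge Q s.length with hQ | hQ
  · rw [h.2.2 Q hQ R, h'.2.2 Q hQ R]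
  · have hp' : n + 1 + l * Q + R = n + 1 + l * s.length :=
      le_antisymm hp (by have := Nat.mul_le_mul_left l hQ; omega)
    rw [hp', h.2.1.1, h'.2.1.1]

theorem exists_encodes_comp_ofVarWord (hl : 0 < l) (T : VarWord (Block l n))
    {v₀ v : RigidSurj l K} (hn : IsFirst v₀ j n) (hj : ((j + 1 : ℕ) : ℕ∞) < K)
    (hv : EqOn v v₀ (Iic n)) :
    ∃ β m, Encodes v₀ j (T.subst β m) (v.comp (ofVarWord hl T)) := by
  have hvn : IsFirst v j n := hn.congr hv
  obtain ⟨m, hm⟩ := v.exists_isFirst_succ hvn hj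
  have hcopy {Q : ℕ} (hQ : Q < m) (R : Fin l) : v.first (v (n + 1 + l * Q + R)) ≤ n :=
    v.first_le_of_isFirst hvn <| Nat.lt_succ_iff.1 <|
      hm.2 _ (block_lt_block_iff (R' := ⟨0, hl⟩).2 (.inl hQ))
  let β (Q : ℕ) : Block l n :=
    if hQ : Q < m then copyBlock v Q (hcopy hQ) else Classical.arbitrary _
  have hlen : (T.subst β m).length = T.pos m := by simp [VarWord.subst]
  refine ⟨β, m, fun p hp => ?_, ?_, fun Q hQ R => ?_⟩
  · rw [comp_apply, eqOn_ofVarWord_id hl T hp]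
    exact hv hp
  · rw [hlen]
    exact hm.comp (isFirst_ofVarWord hl T m)
  · have hget : (T.subst β m)[Q] = Sum.elim id β (T.letter Q) := by simp [VarWord.subst]
    have hle (b : Block l n) : (b.1 R : ℕ) ∈ Iic n := Nat.lt_succ_iff.1 (b.1 R).2
    rw [comp_apply, ofVarWord_block, hget]
    cases hT : T.letter Q with
    | inl b => exact hv (hle b)
    | inr m' =>
      have hm' : m' < m := T.lt_of_lt_pos m Q m' (hlen ▸ hQ) hT
      have hβ : β m' = copyBlock v m' (hcopy hm') := dif_pos hm'
      calc v (n + 1 + l * m' + R) = v ((copyBlock v m' (hcopy hm')).1 R) :=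
            (apply_copyBlock v m' (hcopy hm') R).symm
        _ = v₀ ((β m').1 R) := by rw [hv (hle _), hβ]

/-- The colour `c v` depends only on the values of `v` up to the first occurrence of `j`. -/
def DecidedAt {κ : Type*} (j : ℕ) (c : RigidSurj l K → κ) : Prop :=
  ∀ (n : ℕ) (v v' : RigidSurj l K), IsFirst v j n → EqOn v' v (Iic n) → c v' = c v

/-- `c` is constant on the cylinder of `v₀` at `n` after composition with some `g` that fixes
`{0, …, n}`. -/
def IsLocallyHomogenizable {κ : Type*} (c : RigidSurj l K → κ) (v₀ : RigidSurj l K) (n : ℕ) :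
    Prop :=
  ∃ g : RigidSurj l ⊤, EqOn g id (Iic n) ∧
    ∀ v : RigidSurj l K, EqOn v v₀ (Iic n) → c (v.comp g) = c (v₀.comp g)

theorem DecidedAt.isLocallyHomogenizable (hl : 0 < l) {κ : Type*} [Finite κ]
    {c : RigidSurj l K → κ} (hc : DecidedAt (j + 1) c) (hj : ((j + 1 : ℕ) : ℕ∞) < K)
    {v₀ : RigidSurj l K} (hn : IsFirst v₀ j n) : IsLocallyHomogenizable c v₀ n := by
  classical
  let χ (s : List (Block l n)) : κ := if h : ∃ v, Encodes v₀ j s v then c h.choose else c v₀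
  have hχ {s : List (Block l n)} {v : RigidSurj l K} (h : Encodes v₀ j s v) : c v = χ s := by
    have hs : ∃ v, Encodes v₀ j s v := ⟨v, h⟩
    rw [show χ s = c hs.choose from dif_pos hs]
    exact hc _ _ _ hs.choose_spec.2.1 (hs.choose_spec.eqOn hl h)
  obtain ⟨T, i, hT⟩ := carlsonSimpson χ
  have hi {v : RigidSurj l K} (hv : EqOn v v₀ (Iic n)) : c (v.comp (ofVarWord hl T)) = i := by
    obtain ⟨β, m, h⟩ := exists_encodes_comp_ofVarWord hl T hn hj hv
    rw [hχ h, hT]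
  exact ⟨ofVarWord hl T, eqOn_ofVarWord_id hl T, fun v hv => (hi hv).trans (hi fun _ _ => rfl).symm⟩

end LocalHomogeneity

section Fusion

variable {κ : Type*} {j n : ℕ}

theorem exists_finset_forall_eqOn (l : ℕ) (K : ℕ∞) (n : ℕ) :
    ∃ A : Finset (RigidSurj l K), ∀ v : RigidSurj l K, ∃ v₀ ∈ A, EqOn v v₀ (Iic n) := by
  classical
  let f (v : RigidSurj l K) (i : Fin (n + 1)) : Fin (n + 1) :=
    ⟨v i, (v.apply_le i).trans_lt i.2⟩
  have := Fintype.ofFinite (range f)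
  refine ⟨Finset.univ.image (rangeSplitting f), fun v =>
    ⟨_, Finset.mem_image_of_mem _ (Finset.mem_univ ⟨f v, mem_range_self v⟩), fun i hi => ?_⟩⟩
  have hf := congrFun (apply_rangeSplitting f ⟨f v, mem_range_self v⟩) ⟨i, Nat.lt_succ_of_le hi⟩
  exact congrArg Fin.val hf.symm

theorem exists_forall_mem_finset {α ι : Type*} {r : α → α → Prop} {p : ι → α → Prop}
    (hrefl : ∀ x, r x x) (htrans : ∀ x y z, r x y → r y z → r x z)
    (hp : ∀ i x y, r x y → p i x → p i y) (h : ∀ i x, ∃ y, r x y ∧ p i y) (A : Finset ι) (x : α) :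
    ∃ y, r x y ∧ ∀ i ∈ A, p i y := by
  classical
  induction A using Finset.induction_on with
  | empty => exact ⟨x, hrefl x, by simp⟩
  | insert i A _ ih =>
    obtain ⟨y, hxy, hy⟩ := ih
    obtain ⟨z, hyz, hz⟩ := h i y
    exact ⟨z, htrans x y z hxy hyz,
      (Finset.forall_mem_insert _ _ _).2 ⟨hz, fun i' hi' => hp i' y z hyz (hy i' hi')⟩⟩

theorem exists_refines_forall_eqOn {c : RigidSurj l K → κ}
    (h : ∀ (w : RigidSurj l ⊤) (v₀ : RigidSurj l K), IsFirst v₀ j n →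
      IsLocallyHomogenizable (fun v => c (v.comp w)) v₀ n) (w : RigidSurj l ⊤) :
    ∃ w', Refines n w' w ∧ ∀ v v' : RigidSurj l K, IsFirst v j n → EqOn v' v (Iic n) →
      c (v'.comp w') = c (v.comp w') := by
  let p (v₀ : RigidSurj l K) (w : RigidSurj l ⊤) : Prop := IsFirst v₀ j n →
    ∀ v : RigidSurj l K, EqOn v v₀ (Iic n) → c (v.comp w) = c (v₀.comp w)
  have hp_refines {v₀ : RigidSurj l K} {w w' : RigidSurj l ⊤} (hw' : Refines n w' w)
      (hw : p v₀ w) : p v₀ w' := by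
    rintro hn v hv
    obtain ⟨g, hg, rfl⟩ := hw'
    have hcomp (u : RigidSurj l K) : EqOn (u.comp g) u (Iic n) := fun i hi => congrArg u (hg hi)
    change c ((v.comp g).comp w) = c ((v₀.comp g).comp w)
    rw [hw hn _ ((hcomp v).trans hv), hw hn _ (hcomp v₀)]
  have hp_exists (v₀ : RigidSurj l K) (w : RigidSurj l ⊤) : ∃ w', Refines n w' w ∧ p v₀ w' := by
    by_cases hn : IsFirst v₀ j n
    · obtain ⟨g, hg, hgc⟩ := h w v₀ hn
      exact ⟨g.comp w, ⟨g, hg, rfl⟩, fun _ => hgc⟩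
    · exact ⟨w, .refl n w, fun h => absurd h hn⟩
  obtain ⟨A, hA⟩ := exists_finset_forall_eqOn l K n
  obtain ⟨w', hw', hwA⟩ := exists_forall_mem_finset (p := p) (r := fun w w' => Refines n w' w)
    (.refl n) (fun _ _ _ h h' => h'.trans h) (fun _ _ _ => hp_refines) hp_exists A w
  refine ⟨w', hw', fun v v' hv hv' => ?_⟩
  obtain ⟨v₀, hv₀, hvv₀⟩ := hA v
  have hn := hv.congr hvv₀.symm
  rw [hwA v₀ hv₀ hn v hvv₀, hwA v₀ hv₀ hn v' (hv'.trans hvv₀)]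

theorem exists_decidedAt_comp {c : RigidSurj l K → κ}
    (h : ∀ (w : RigidSurj l ⊤) (v₀ : RigidSurj l K) (n : ℕ), IsFirst v₀ j n →
      IsLocallyHomogenizable (fun v => c (v.comp w)) v₀ n) :
    ∃ w : RigidSurj l ⊤, DecidedAt j fun v => c (v.comp w) := by
  choose f hf hfc using fun n => exists_refines_forall_eqOn (fun w v₀ => h w v₀ n)
  obtain ⟨w, hw⟩ := exists_seq_of_forall_exists (p := fun _ _ => True)
    (r := fun n w w' => w' = f n w) (a := RigidSurj.id l) trivial
    fun n w _ => ⟨f n w, trivial, rfl⟩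
  obtain ⟨W, hW⟩ := exists_fusion (w := w) fun n => (hw n).2 ▸ hf n (w n)
  refine ⟨W, fun n v v' hv hv' => ?_⟩
  obtain ⟨g, hg, rfl⟩ := hW (n + 1)
  have hcomp (u : RigidSurj l K) : EqOn (u.comp g) u (Iic n) := fun i hi =>
    congrArg u (hg (mem_Iic.2 (le_trans hi n.le_succ)))
  simp only [(hw n).2, ← comp_assoc]
  exact hfc n _ _ _ (hv.congr (hcomp v)) ((hcomp v').trans (hv'.trans (hcomp v).symm))

theorem DecidedAt.comp {c : RigidSurj l K → κ} (hc : DecidedAt j c) (w : RigidSurj l ⊤) :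
    DecidedAt j fun v => c (v.comp w) := by
  intro n v v' hv hv'
  have hw := w.isFirst_first (ENat.natCast_lt_top n)
  refine hc _ _ _ (hv.comp hw) fun i hi => hv' ?_
  rcases (mem_Iic.1 hi).eq_or_lt with rfl | hi
  · exact hw.1.le
  · exact (hw.2 i hi).le

theorem DecidedAt.exists_forall_comp_eq (hl : 0 < l) [Finite κ] (hj : (j : ℕ∞) < K)
    {c : RigidSurj l K → κ} (hc : DecidedAt j c) :
    ∃ w : RigidSurj l ⊤, ∀ v v' : RigidSurj l K, c (v.comp w) = c (v'.comp w) := by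
  induction j generalizing c with
  | zero =>
    refine ⟨.id l, fun v v' => hc 0 v' v v'.isFirst_zero fun i hi => ?_⟩
    obtain rfl : i = 0 := Nat.le_zero.1 hi
    rw [v.isFirst_zero.1, v'.isFirst_zero.1]
  | succ j ih =>
    obtain ⟨w, hw⟩ := exists_decidedAt_comp fun w v₀ n hn =>
      (hc.comp w).isLocallyHomogenizable hl hj hn
    obtain ⟨w', hw'⟩ := ih ((Nat.cast_lt.2 j.lt_succ_self).trans hj) hw
    exact ⟨w'.comp w, hw'⟩

end Fusion

section Category

theorem exists_insert (w : RigidSurj l ⊤) {n a : ℕ} (ha : IsFirst w (n + 1) a) {f : ℕ → ℕ}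
    (hle : ∀ p, f p ≤ n) (hmod : ∀ p, f p % l ≤ p % l) (M : ℕ) :
    ∃ w' : RigidSurj l ⊤, IsFirst w' (n + 1) (a + l * M) ∧
      ∀ p < a + l * M, w' p = if p < a then w p else f p := by
  let g (p : ℕ) : ℕ := if p < a + l * M then if p < a then w p else f p else w (p - l * M)
  have hlt {p : ℕ} (hp : p < a + l * M) : g p = if p < a then w p else f p := if_pos hp
  have hsmall {p : ℕ} (hp : p < a + l * M) : g p ≤ n := by
    rw [hlt hp]
    split_ifs with hpa
    · exact Nat.lt_succ_iff.1 (ha.2 p hpa)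
    · exact hle p
  have hge (p : ℕ) (hp : a ≤ p) : g (p + l * M) = w p := by
    simp [g, hp]
  have hfirst {j q : ℕ} (hj : IsFirst w j q) (ha : a ≤ q) (hn : n < j) :
      IsFirst g j (q + l * M) := by
    refine ⟨(hge q ha).trans hj.1, fun m hm => ?_⟩
    rcases lt_or_ge m (a + l * M) with h | h
    · exact (hsmall h).trans_lt hn
    · obtain ⟨m, rfl⟩ := Nat.exists_eq_add_of_le' ((Nat.le_add_left _ _).trans h)
      rw [hge m (Nat.le_of_add_le_add_right h)]
      exact hj.2 m (Nat.lt_of_add_lt_add_right hm)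
  refine ⟨⟨g, fun p => ?_, fun _ => ENat.natCast_lt_top _, fun j hj => ?_⟩,
    hfirst ha le_rfl n.lt_succ_self, fun p => hlt⟩
  · rcases lt_or_ge p (a + l * M) with h | h
    · rw [hlt h]
      split_ifs
      exacts [w.mod_le p, hmod p]
    · obtain ⟨p, rfl⟩ := Nat.exists_eq_add_of_le' ((Nat.le_add_left _ _).trans h)
      rw [hge p (Nat.le_of_add_le_add_right h), Nat.add_mul_mod_self_left]
      exact w.mod_le p
  · obtain ⟨q, hq, hqmod⟩ := w.exists_isFirst hj
    rcases lt_or_ge q a with h | h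
    · refine ⟨q, hq.congr fun p hp => ?_, hqmod⟩
      have hpa : p < a := lt_of_le_of_lt hp h
      rw [hlt (hpa.trans_le (Nat.le_add_right _ _)), if_pos hpa]
    · have hn : n < j := by
        by_contra! hjn
        exact (hq.lt_of_lt ha (Nat.lt_succ_of_le hjn)).not_ge h
      exact ⟨q + l * M, hfirst hq h hn, by rw [Nat.add_mul_mod_self_left, hqmod]⟩

theorem exists_extension (w : RigidSurj l ⊤) {n a : ℕ} (ha : IsFirst w (n + 1) a)
    {v z : RigidSurj l K} (hv : ∀ p, v.first (z p) ≤ n) (hz : EqOn z (v.comp w) (Iio a)) (M : ℕ) :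
    ∃ w' : RigidSurj l ⊤, EqOn w' w (Iio a) ∧ IsFirst w' (n + 1) (a + l * M) ∧
      EqOn (v.comp w') z (Iio (a + l * M)) := by
  obtain ⟨w', hfirst, hw'⟩ := w.exists_insert ha hv
    (fun p => (v.first_mod (z.coe_lt p)).trans_le (z.mod_le p)) M
  refine ⟨w', fun p hp => ?_, hfirst, fun p hp => ?_⟩
  · rw [hw' p (lt_of_lt_of_le hp (Nat.le_add_right _ _)), if_pos (mem_Iio.1 hp)]
  · rw [comp_apply, hw' p hp]
    split_ifs with hpa
    · exact (hz hpa).symm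
    · exact v.apply_first (z.coe_lt p)

variable {k : ℕ}

theorem coe_lt_succ_iff {i : ℕ} : (i : ℕ∞) < ((k + 1 : ℕ) : ℕ∞) ↔ i ≤ k := by
  rw [Nat.cast_lt, Nat.lt_succ_iff]

theorem apply_le_last (v : RigidSurj l ((k + 1 : ℕ) : ℕ∞)) (p : ℕ) : v p ≤ k :=
  coe_lt_succ_iff.1 (v.coe_lt p)

theorem isFirst_first_last (v : RigidSurj l ((k + 1 : ℕ) : ℕ∞)) : IsFirst v k (v.first k) :=
  v.isFirst_first (coe_lt_succ_iff.2 le_rfl)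

theorem first_le_first_last (v : RigidSurj l ((k + 1 : ℕ) : ℕ∞)) {i : ℕ} (hi : i ≤ k) :
    v.first i ≤ v.first k :=
  v.first_le_of_isFirst v.isFirst_first_last hi

theorem isLocallyHomogenizable_of_isLocallyConstant (hl : 0 < l) {κ : Type*}
    {c : RigidSurj l ((k + 1 : ℕ) : ℕ∞) → κ} (hc : IsLocallyConstant c)
    {v : RigidSurj l ((k + 1 : ℕ) : ℕ∞)} {n : ℕ} (hv : IsFirst v k n) :
    IsLocallyHomogenizable c v n := by
  obtain ⟨M, -, hM⟩ := (hasBasis_nhds v).eventually_iff.1 (hc.eventually_eq v)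
  obtain ⟨g, hid, hg, hvg⟩ := (RigidSurj.id l).exists_extension (n := n) (v := v) (z := v)
    (.of_eqOn_id fun _ _ => rfl) (fun p => v.first_le_of_isFirst hv (v.apply_le_last p))
    (fun _ _ => rfl) M
  have hlM : M ≤ l * M := Nat.le_mul_of_pos_left M hl
  have hgc {u : RigidSurj l ((k + 1 : ℕ) : ℕ∞)} (hu : EqOn u v (Iic n)) : c (u.comp g) = c v := by
    refine hM fun p hp => ?_
    have hp' : p < n + 1 + l * M := by rw [mem_Iic] at hp; omega
    rw [← hvg hp']
    exact hu (Nat.lt_succ_iff.1 (hg.2 p hp'))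
  exact ⟨g, fun p hp => hid (Nat.lt_succ_of_le hp),
    fun u hu => (hgc hu).trans (hgc fun _ _ => rfl).symm⟩

/-- `v.comp w ∈ D` for every `v` in the cylinder of `v₀` at `n`, because of the values of `w` below
the first occurrence of `n + 1`. -/
def Forces (n : ℕ) (D : Set (RigidSurj l K)) (v₀ : RigidSurj l K) (w : RigidSurj l ⊤) : Prop :=
  ∀ (v : RigidSurj l K) (w' : RigidSurj l ⊤), EqOn v v₀ (Iic n) →
    EqOn w' w (Iio (w.first (n + 1))) → v.comp w' ∈ D

theorem eqOn_Iio_first_trans {v v' v'' : RigidSurj l K} {j : ℕ} (hj : (j : ℕ∞) < K)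
    (h' : EqOn v'' v' (Iio (v'.first j))) (h : EqOn v' v (Iio (v.first j))) :
    EqOn v'' v (Iio (v.first j)) := by
  refine (h'.mono (Iio_subset_Iio ?_)).trans h
  by_contra! hlt
  have hv' := h hlt
  rw [v'.apply_first hj] at hv'
  exact hlt.not_ge ((v.isFirst_first hj).le_of_apply_eq hv'.symm)

theorem Forces.of_eqOn {n : ℕ} {D : Set (RigidSurj l K)} {v : RigidSurj l K} {w w' : RigidSurj l ⊤}
    (h : Forces n D v w) (hw' : EqOn w' w (Iio (w.first (n + 1)))) : Forces n D v w' :=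
  fun u w'' hu hw'' => h u w'' hu (eqOn_Iio_first_trans (ENat.natCast_lt_top _) hw'' hw')

theorem exists_forces (hl : 0 < l) {D : Set (RigidSurj l ((k + 1 : ℕ) : ℕ∞))} (hD : IsOpen D)
    (hDd : Dense D) {n : ℕ} {v : RigidSurj l ((k + 1 : ℕ) : ℕ∞)} (hv : v.first k ≤ n)
    (w : RigidSurj l ⊤) :
    ∃ w' : RigidSurj l ⊤, EqOn w' w (Iio (w.first (n + 1))) ∧ Forces n D v w' := by
  obtain ⟨z, hz, hzD⟩ := hDd.inter_open_nonempty _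
    (isOpen_setOf_eqOn (v.comp w) (w.first (n + 1))) ⟨v.comp w, fun _ _ => rfl⟩
  obtain ⟨M, -, hM⟩ := (hasBasis_nhds z).mem_iff.1 (hD.mem_nhds hzD)
  obtain ⟨w', hw', hfirst, hvw'⟩ := w.exists_extension (v := v) (z := z)
    (w.isFirst_first (ENat.natCast_lt_top (n + 1)))
    (fun p => (v.first_le_first_last (z.apply_le_last p)).trans hv)
    (hz.mono Iio_subset_Iic_self) (M + 1)
  have hlM : M + 1 ≤ l * (M + 1) := Nat.le_mul_of_pos_left (M + 1) hl
  refine ⟨w', hw', fun u w'' hu hw'' => hM fun p hp => ?_⟩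
  have hp' : p < w.first (n + 1) + l * (M + 1) := by rw [mem_Iic] at hp; omega
  rw [w'.first_eq hfirst] at hw''
  rw [← hvw' hp', comp_apply, hw'' hp']
  exact hu (Nat.lt_succ_iff.1 (hfirst.2 p hp'))

theorem dense_interior_setOf_forall_comp_mem (hl : 0 < l)
    {D : Set (RigidSurj l ((k + 1 : ℕ) : ℕ∞))} (hD : IsOpen D) (hDd : Dense D) (n : ℕ) :
    Dense (interior {w : RigidSurj l ⊤ |
      ∀ v : RigidSurj l ((k + 1 : ℕ) : ℕ∞), v.first k ≤ n → v.comp w ∈ D}) := by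
  refine fun w => (mem_closure_iff_nhds_basis (hasBasis_nhds w)).2 fun M _ => ?_
  let N := max n M
  obtain ⟨A, hA⟩ := exists_finset_forall_eqOn l ((k + 1 : ℕ) : ℕ∞) N
  have hexists (v : RigidSurj l ((k + 1 : ℕ) : ℕ∞)) (w : RigidSurj l ⊤) :
      ∃ w' : RigidSurj l ⊤, EqOn w' w (Iio (w.first (N + 1))) ∧
        (v.first k ≤ N → Forces N D v w') := by
    by_cases hv : v.first k ≤ N
    · exact (exists_forces hl hD hDd hv w).imp fun w' h => ⟨h.1, fun _ => h.2⟩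
    · exact ⟨w, fun _ _ => rfl, fun h => absurd h hv⟩
  obtain ⟨w', hw', hwA⟩ := exists_forall_mem_finset
    (r := fun w w' : RigidSurj l ⊤ => EqOn w' w (Iio (w.first (N + 1))))
    (p := fun v w => v.first k ≤ N → Forces N D v w) (fun _ _ _ => rfl)
    (fun _ _ _ h h' => eqOn_Iio_first_trans (ENat.natCast_lt_top _) h' h)
    (fun _ _ _ hw' h hv => (h hv).of_eqOn hw') hexists A w
  refine ⟨w', mem_interior.2 ⟨_, fun w'' hw'' v hv => ?_,
    isOpen_setOf_eqOn w' (w'.first (N + 1)), fun _ _ => rfl⟩, hw'.mono fun i hi => ?_⟩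
  · obtain ⟨v₀, hv₀, hvv₀⟩ := hA v
    have hvN : v.first k ≤ N := hv.trans (le_max_left n M)
    have hfirst : IsFirst v₀ k (v.first k) :=
      v.isFirst_first_last.congr (hvv₀.symm.mono (Iic_subset_Iic.2 hvN))
    exact hwA v₀ hv₀ ((v₀.first_eq hfirst).trans_le hvN) v w'' hvv₀
      (hw''.mono Iio_subset_Iic_self)
  · exact (Nat.lt_succ_of_le (le_trans hi (le_max_right n M))).trans_le
      (w.le_first (ENat.natCast_lt_top (N + 1)))

theorem eventually_residual_forall_comp_mem (hl : 0 < l)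
    {G : Set (RigidSurj l ((k + 1 : ℕ) : ℕ∞))}
    (hG : G ∈ residual (RigidSurj l ((k + 1 : ℕ) : ℕ∞))) :
    ∀ᶠ w in residual (RigidSurj l ⊤), ∀ v : RigidSurj l ((k + 1 : ℕ) : ℕ∞), v.comp w ∈ G := by
  obtain ⟨S, hSopen, hSdense, hScount, hSG⟩ := mem_residual_iff.1 hG
  have h : ∀ᶠ w in residual (RigidSurj l ⊤), ∀ D ∈ S, ∀ n,
      ∀ v : RigidSurj l ((k + 1 : ℕ) : ℕ∞), v.first k ≤ n → v.comp w ∈ D :=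
    (eventually_countable_ball hScount).2 fun D hD => eventually_countable_forall.2 fun n =>
      Filter.mem_of_superset (residual_of_dense_open isOpen_interior
        (dense_interior_setOf_forall_comp_mem hl (hSopen D hD) (hSdense D hD) n)) interior_subset
  exact h.mono fun w hw v => hSG fun D hD => hw D hD _ v le_rfl

end Category

section Ramsey

theorem exists_mem_residual_isLocallyConstant_domRestrict {X κ : Type*} [TopologicalSpace X]
    [Countable κ] {c : X → κ} (hc : ∀ i, BaireMeasurableSet (c ⁻¹' {i})) :
    ∃ G ∈ residual X, IsLocallyConstant (G.domRestrict c) := by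
  choose U hU hcU using fun i => (hc i).residualEq_isOpen
  refine ⟨⋂ i, {x | c x = i ↔ x ∈ U i},
    countable_iInter_mem.2 fun i => Filter.eventuallyEq_set.1 (hcU i),
    IsLocallyConstant.iff_isOpen_fiber.2 fun i => ?_⟩
  convert (hU i).preimage continuous_subtype_val using 1
  exact Set.ext fun x => mem_iInter.1 x.2 i

theorem exists_isLocallyConstant_comp (hl : 0 < l) {k : ℕ} {κ : Type*} [Countable κ]
    {c : RigidSurj l ((k + 1 : ℕ) : ℕ∞) → κ} (hc : ∀ i, BaireMeasurableSet (c ⁻¹' {i})) :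
    ∃ w : RigidSurj l ⊤,
      IsLocallyConstant fun v : RigidSurj l ((k + 1 : ℕ) : ℕ∞) => c (v.comp w) := by
  obtain ⟨G, hG, hcG⟩ := exists_mem_residual_isLocallyConstant_domRestrict hc
  have : Nonempty (RigidSurj l ⊤) := ⟨.id l⟩
  obtain ⟨w, hw⟩ := (dense_of_mem_residual (eventually_residual_forall_comp_mem hl hG)).nonempty
  exact ⟨w, hcG.comp_continuous ((continuous_comp_right w).subtype_mk hw)⟩

theorem exists_forall_comp_eq (hl : 0 < l) {k : ℕ} {κ : Type*} [Finite κ]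
    {c : RigidSurj l (k : ℕ∞) → κ} (hc : ∀ i, BaireMeasurableSet (c ⁻¹' {i})) :
    ∃ w : RigidSurj l ⊤, ∀ v v' : RigidSurj l (k : ℕ∞), c (v.comp w) = c (v'.comp w) := by
  obtain _ | k := k
  · exact ⟨.id l, fun v : RigidSurj l ((0 : ℕ) : ℕ∞) => absurd (v.coe_lt 0) (by simp)⟩
  obtain ⟨w₁, hw₁⟩ := exists_isLocallyConstant_comp hl hc
  obtain ⟨w₂, hw₂⟩ := exists_decidedAt_comp (c := fun v => c (v.comp w₁)) fun w _ _ hv =>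
    isLocallyHomogenizable_of_isLocallyConstant hl (hw₁.comp_continuous (continuous_comp_right w))
      hv
  obtain ⟨w₃, hw₃⟩ := hw₂.exists_forall_comp_eq hl (coe_lt_succ_iff.2 le_rfl)
  exact ⟨w₃.comp (w₂.comp w₁), hw₃⟩

end Ramsey

end RigidSurj

end RigidSurjections

section Souslin

section Envelope

variable {X : Type*} [TopologicalSpace X] [SecondCountableTopology X]

theorem exists_isOpen_isMeagre_inter_forall_subset (A : Set X) :
    ∃ U, IsOpen U ∧ IsMeagre (A ∩ U) ∧ ∀ V, IsOpen V → IsMeagre (A ∩ V) → V ⊆ U := by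
  let b := TopologicalSpace.countableBasis X
  have hb : TopologicalSpace.IsTopologicalBasis b := TopologicalSpace.isBasis_countableBasis X
  refine ⟨⋃ V ∈ {V ∈ b | IsMeagre (A ∩ V)}, V, isOpen_biUnion fun V hV => hb.isOpen hV.1, ?_,
    fun V hV hAV x hx => ?_⟩
  · rw [inter_iUnion₂]
    exact isMeagre_biUnion ((TopologicalSpace.countable_countableBasis X).mono fun V hV => hV.1)
      fun V hV => hV.2
  · obtain ⟨W, hW, hxW, hWV⟩ := hb.exists_subset_of_mem_open hx hV
    exact mem_biUnion (x := W) ⟨hW, hAV.mono (inter_subset_inter_right A hWV)⟩ hxW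

theorem exists_baireMeasurableSet_envelope (A : Set X) :
    ∃ B, BaireMeasurableSet B ∧ A ⊆ B ∧
      ∀ C, BaireMeasurableSet C → A ⊆ C → IsMeagre (B \ C) := by
  obtain ⟨U, hU, hAU, hmax⟩ := exists_isOpen_isMeagre_inter_forall_subset A
  have hB : Uᶜ ∪ A ∩ U = Uᶜ ∪ A := by
    rw [union_inter_distrib_left, compl_union_self, inter_univ]
  have hBm : BaireMeasurableSet (Uᶜ ∪ A) :=
    hB ▸ hU.baireMeasurableSet.compl.union hAU.baireMeasurableSet
  refine ⟨Uᶜ ∪ A, hBm, subset_union_right, fun C hC hAC => ?_⟩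
  obtain ⟨O, hO, hBO⟩ := (hBm.diff hC).residualEq_isOpen
  have hmem : ∀ᶠ x in residual X, x ∈ (Uᶜ ∪ A) \ C ↔ x ∈ O := Filter.eventuallyEq_set.1 hBO
  have hOU : O ⊆ U := hmax O hO (hmem.mono fun x hx hxA => (hx.2 hxA.2).2 (hAC hxA.1))
  exact hmem.mono fun x hx hxB =>
    hxB.1.elim (fun hxU => hxU (hOU (hx.1 hxB))) fun hxA => hxB.2 (hAC hxA)

end Envelope

variable {X : Type*} {A : List ℕ → Set X}

/-- The part of `souslinOp A` contributed by the infinite sequences that extend `s`. -/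
def souslinTail (A : List ℕ → Set X) (s : List ℕ) : Set X :=
  {y | ∃ x : ℕ → ℕ, (List.range s.length).map x = s ∧ ∀ n, y ∈ A ((List.range n).map x)}

theorem souslinTail_nil : souslinTail A [] = souslinOp A := by
  ext y
  simp [souslinTail, souslinOp]

theorem souslinTail_subset (s : List ℕ) : souslinTail A s ⊆ A s := by
  rintro y ⟨x, hx, hy⟩
  exact hx ▸ hy s.length

theorem souslinTail_subset_iUnion (s : List ℕ) :
    souslinTail A s ⊆ ⋃ m, souslinTail A (s ++ [m]) := by
  rintro y ⟨x, hx, hy⟩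
  refine mem_iUnion.2 ⟨x s.length, x, ?_, hy⟩
  rw [List.length_append, List.length_singleton, List.range_succ, List.map_append, hx,
    List.map_singleton]

theorem mem_souslinOp_of_forall_exists {H : List ℕ → Set X} {y : X} (hHA : ∀ s, H s ⊆ A s)
    (hy : y ∈ H []) (h : ∀ s, y ∈ H s → ∃ m, y ∈ H (s ++ [m])) : y ∈ souslinOp A := by
  choose! g hg using h
  let S (n : ℕ) : List ℕ := n.rec [] fun _ s => s ++ [g s]
  have hS (n : ℕ) : (List.range n).map (fun i => g (S i)) = S n := by
    induction n with
    | zero => rfl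
    | succ n ih => rw [List.range_succ, List.map_append, ih, List.map_singleton]
  have hyS (n : ℕ) : y ∈ H (S n) := by
    induction n with
    | zero => exact hy
    | succ n ih => exact hg _ ih
  refine mem_iUnion.2 ⟨fun i => g (S i), mem_iInter.2 fun n => ?_⟩
  rw [hS]
  exact hHA _ (hyS n)

/- Nikodym's theorem. With `H s` the part inside `A s` of an envelope of `souslinTail A s`, outside
a meagre set every point of `H s` lies in `H (s ++ [m])` for some `m`, so that a point of `H []`
follows an infinite branch. -/
theorem baireMeasurableSet_souslinOp [TopologicalSpace X] [SecondCountableTopology X]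
    (hA : ∀ s, BaireMeasurableSet (A s)) : BaireMeasurableSet (souslinOp A) := by
  choose B hB hTB hmin using fun s => exists_baireMeasurableSet_envelope (souslinTail A s)
  have hH (s : List ℕ) : BaireMeasurableSet (B s ∩ A s) := (hB s).inter (hA s)
  have hTH (s : List ℕ) : souslinTail A s ⊆ B s ∩ A s :=
    subset_inter (hTB s) (souslinTail_subset s)
  have hmeagre (s : List ℕ) : IsMeagre (B s \ ⋃ m, B (s ++ [m]) ∩ A (s ++ [m])) :=
    hmin s _ (.iUnion fun m => hH _)
      ((souslinTail_subset_iUnion s).trans (iUnion_mono fun m => hTH _))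
  have hresidual : ∀ᶠ y in residual X, y ∉ ⋃ s, B s \ ⋃ m, B (s ++ [m]) ∩ A (s ++ [m]) :=
    isMeagre_iUnion hmeagre
  refine (hH []).congr (Filter.eventuallyEq_set.2 (hresidual.mono fun y hy => ⟨fun h => ?_, fun h =>
    hTH [] (souslinTail_nil.symm ▸ h)⟩))
  refine mem_souslinOp_of_forall_exists (fun s => inter_subset_right) h fun s hs => ?_
  by_contra hs'
  exact hy (mem_iUnion.2 ⟨s, hs.1, fun hm => hs' (mem_iUnion.1 hm)⟩)

theorem preimage_souslinOp {Y : Type*} (g : Y → X) :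
    g ⁻¹' souslinOp A = souslinOp fun s => g ⁻¹' A s := by
  simp only [souslinOp, preimage_iUnion, preimage_iInter]

theorem SouslinMeasurable.baireMeasurableSet_preimage {Y : Type*} [TopologicalSpace X]
    [SecondCountableTopology X] {t : TopologicalSpace Y} {g : X → Y} (hg : Continuous g)
    {S : Set Y} (hS : SouslinMeasurable t S) : BaireMeasurableSet (g ⁻¹' S) := by
  refine hS {S | BaireMeasurableSet (g ⁻¹' S)} (fun U hU => ?_) (fun _ => .compl)
    (fun _ h _ h' => h.union h') fun f hf => ?_
  · exact (hg.isOpen_preimage U hU).baireMeasurableSet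
  · rw [mem_ofPred_eq, preimage_souslinOp]
    exact baireMeasurableSet_souslinOp hf

end Souslin

section Encoding

variable {l : ℕ}

/-- The position of a point of `ω·l` in the `⪯`-order. -/
def encodeL (a : ℕ × Fin l) : ℕ := a.1 * l + a.2

theorem encodeL_decodeL (hl : 0 < l) (n : ℕ) : encodeL (decodeL l hl n) = n :=
  Nat.div_add_mod' n l

theorem decodeL_encodeL (hl : 0 < l) (a : ℕ × Fin l) : decodeL l hl (encodeL a) = a := by
  obtain ⟨n, i, hi⟩ := a
  ext <;> simp only [decodeL, encodeL]
  · rw [Nat.add_comm, Nat.add_mul_div_right _ _ hl, Nat.div_eq_of_lt hi, Nat.zero_add]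
  · rw [Nat.mul_add_mod_self_right, Nat.mod_eq_of_lt hi]

theorem decodeL_surjective (hl : 0 < l) : Function.Surjective (decodeL l hl) :=
  Function.LeftInverse.surjective (decodeL_encodeL hl)

theorem lexLE_decodeL_iff (hl : 0 < l) {n m : ℕ} :
    lexLE (decodeL l hl n) (decodeL l hl m) ↔ n ≤ m := by
  have hn := Nat.div_add_mod' n l
  have hm := Nat.div_add_mod' m l
  simp only [lexLE, decodeL, Fin.mk_le_mk]
  refine ⟨?_, fun h => ?_⟩
  · rintro (h | ⟨h, hmod⟩)
    · exact (Nat.lt_of_div_lt_div h).le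
    · rw [← hn, ← hm, h]
      exact Nat.add_le_add_left hmod _
  · refine (Nat.div_le_div_right (c := l) h).lt_or_eq.imp_right fun hdiv => ⟨hdiv, ?_⟩
    rw [← hn, ← hm, hdiv] at h
    exact Nat.le_of_add_le_add_left h

theorem ordLE_decodeL_iff (hl : 0 < l) {n m : ℕ} :
    ordLE (decodeL l hl n) (decodeL l hl m) ↔ n % l < m % l ∨ n % l = m % l ∧ n ≤ m := by
  simp only [ordLE, decodeL, Fin.mk_lt_mk, Fin.mk.injEq]
  refine or_congr_right (and_congr_right fun hmod => ⟨fun h => ?_, Nat.div_le_div_right⟩)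
  rw [← Nat.div_add_mod' n l, ← Nat.div_add_mod' m l, hmod]
  exact Nat.add_le_add_right (Nat.mul_le_mul_right l h) _

theorem exists_mem_minReps (E : Setoid ℕ) (n : ℕ) : ∃ m ∈ minReps E, E.r n m := by
  have hne : {m | E.r n m}.Nonempty := ⟨n, E.refl n⟩
  exact ⟨sInf {m | E.r n m}, fun m hm => Nat.sInf_le (E.trans (Nat.sInf_mem hne) hm),
    Nat.sInf_mem hne⟩

theorem eq_of_mem_minReps {E : Setoid ℕ} {n m : ℕ} (hn : n ∈ minReps E) (hm : m ∈ minReps E)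
    (h : E.r n m) : n = m :=
  (hn m h).antisymm (hm n (E.symm h))

variable (hl : 0 < l) (E : Setoid (ℕ × Fin l))

theorem decodeL_mem_lexMinRepsL_iff {n : ℕ} :
    decodeL l hl n ∈ lexMinRepsL E ↔ n ∈ minReps (E.comap (decodeL l hl)) := by
  refine (decodeL_surjective hl).forall.trans ?_
  simp only [lexLE_decodeL_iff]
  rfl

theorem decodeL_mem_minRepsL_iff {n : ℕ} :
    decodeL l hl n ∈ minRepsL E ↔ ∀ m, (E.comap (decodeL l hl)).r n m →
      n % l < m % l ∨ n % l = m % l ∧ n ≤ m := by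
  refine (decodeL_surjective hl).forall.trans ?_
  simp only [ordLE_decodeL_iff]
  rfl

theorem lexMinRepsL_eq_minRepsL_iff :
    lexMinRepsL E = minRepsL E ↔ ∀ n ∈ minReps (E.comap (decodeL l hl)), ∀ m,
      (E.comap (decodeL l hl)).r n m → n % l ≤ m % l := by
  rw [Set.ext_iff, (decodeL_surjective hl).forall]
  simp only [decodeL_mem_lexMinRepsL_iff, decodeL_mem_minRepsL_iff]
  refine ⟨fun h n hn m hnm => ?_, fun h n => ⟨fun hn m hnm => ?_, fun hn => ?_⟩⟩
  · exact ((h n).1 hn m hnm).elim le_of_lt fun h => h.1.le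
  · exact (h n hn m hnm).lt_or_eq.imp_right fun hmod => ⟨hmod, hn m hnm⟩
  · obtain ⟨r, hr, hnr⟩ := exists_mem_minReps (E.comap (decodeL l hl)) n
    have hle : n ≤ r := ((hn r hnr).resolve_left (h r hr n ((E.comap _).symm hnr)).not_gt).2
    exact (hle.antisymm (hr n ((E.comap _).symm hnr))) ▸ hr

theorem encard_classes : (classes E).encard = (minReps (E.comap (decodeL l hl))).encard := by
  have himage : classes E =
      (fun n => {a | E.r (decodeL l hl n) a}) '' minReps (E.comap (decodeL l hl)) := by
    refine Subset.antisymm ?_ (image_subset_iff.2 fun n _ => ⟨_, rfl⟩)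
    rintro _ ⟨a, rfl⟩
    obtain ⟨r, hr, har⟩ := exists_mem_minReps (E.comap (decodeL l hl)) (encodeL a)
    have har' : E.r a (decodeL l hl r) := by rwa [Setoid.comap_rel, decodeL_encodeL] at har
    exact ⟨r, hr, Set.ext fun b => ⟨E.trans har', E.trans (E.symm har')⟩⟩
  rw [himage, InjOn.encard_image]
  intro n hn m hm hnm
  exact eq_of_mem_minReps hn hm ((Set.ext_iff.1 hnm (decodeL l hl m)).2 (E.refl _))

/-- The conditions defining `𝓔_∞(ω·l)` (for `K = ⊤`) and `𝓔_k(ω·l)` (for `K = k`), transported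
to `ℕ` along the `⪯`-increasing enumeration of `ω·l`. -/
structure IsTyped (l : ℕ) (K : ℕ∞) (E : Setoid ℕ) : Prop where
  encard_minReps : (minReps E).encard = K
  pRep_mod : ∀ j : ℕ, (j : ℕ∞) < K → pRep E j % l = j % l
  mod_le : ∀ n ∈ minReps E, ∀ m, E.r n m → n % l ≤ m % l

theorem pRepL_eq (h : lexMinRepsL E = minRepsL E) (j : ℕ) :
    pRepL l hl E j = decodeL l hl (pRep (E.comap (decodeL l hl)) j) := by
  simp only [pRepL, pRep, ← h, decodeL_mem_lexMinRepsL_iff]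

theorem isTyped_comap_decodeL_iff {K : ℕ∞} : IsTyped l K (E.comap (decodeL l hl)) ↔
    (classes E).encard = K ∧
      (∀ j : ℕ, (j : ℕ∞) < K → (pRepL l hl E j).2 = ⟨j % l, Nat.mod_lt j hl⟩) ∧
      lexMinRepsL E = minRepsL E := by
  rw [encard_classes hl, and_comm (b := lexMinRepsL E = minRepsL E)]
  constructor
  · rintro ⟨hcard, hmod, hle⟩
    have hmin := (lexMinRepsL_eq_minRepsL_iff hl E).2 hle
    exact ⟨hcard, hmin, fun j hj => Fin.ext (by rw [pRepL_eq hl E hmin]; exact hmod j hj)⟩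
  · rintro ⟨hcard, hmin, hmod⟩
    refine ⟨hcard, fun j hj => ?_, (lexMinRepsL_eq_minRepsL_iff hl E).1 hmin⟩
    have hj' := congrArg Fin.val (hmod j hj)
    rwa [pRepL_eq hl E hmin] at hj'

theorem mem_EInfL_iff : E ∈ EInfL l hl ↔ IsTyped l ⊤ (E.comap (decodeL l hl)) := by
  simp [isTyped_comap_decodeL_iff, EInfL]

theorem mem_EkL_iff {k : ℕ} : E ∈ EkL l hl k ↔ IsTyped l k (E.comap (decodeL l hl)) := by
  have hcard : (classes E).encard = k ↔ (classes E).Finite ∧ (classes E).ncard = k := by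
    refine ⟨fun h => ⟨finite_of_encard_eq_coe h, ?_⟩, fun ⟨hfin, h⟩ => ?_⟩
    · rw [ncard, h, ENat.toNat_natCast]
    · rw [← hfin.cast_ncard_eq, h]
  simp only [isTyped_comap_decodeL_iff, hcard, EkL, mem_ofPred_eq, Nat.cast_lt, and_assoc]

end Encoding

section Kernel

theorem coe_lt_encard_iff {α : Type*} {s : Set α} {j : ℕ} :
    (j : ℕ∞) < s.encard ↔ ∀ hs : s.Finite, j < hs.toFinset.card := by
  refine ⟨fun h hs => ?_, fun h => ?_⟩
  · rwa [hs.encard_eq_coe_toFinset_card, Nat.cast_lt] at h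
  · rcases s.finite_or_infinite with hs | hs
    · rw [hs.encard_eq_coe_toFinset_card, Nat.cast_lt]
      exact h hs
    · exact hs.encard_eq ▸ ENat.natCast_lt_top j

theorem encard_setOf_coe_lt (K : ℕ∞) : {j : ℕ | (j : ℕ∞) < K}.encard = K := by
  cases K with
  | top => simp
  | coe k =>
    have h : {j : ℕ | (j : ℕ∞) < (k : ℕ∞)} = Finset.range k := by ext; simp
    rw [h, encard_coe_eq_coe_finsetCard, Finset.card_range]

variable {l : ℕ} {K : ℕ∞}

namespace RigidSurj

variable (v : RigidSurj l K)

theorem first_lt_first {i j : ℕ} (hij : i < j) (hj : (j : ℕ∞) < K) : v.first i < v.first j :=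
  (v.isFirst_first ((Nat.cast_lt.2 hij).trans hj)).lt_of_lt (v.isFirst_first hj) hij

theorem first_injOn : InjOn v.first {j : ℕ | (j : ℕ∞) < K} := fun i hi j hj h => by
  rw [← v.apply_first hi, h, v.apply_first hj]

theorem minReps_ker : minReps (Setoid.ker v) = v.first '' {j : ℕ | (j : ℕ∞) < K} := by
  refine Subset.antisymm (fun n hn => ⟨v n, v.coe_lt n, (v.first_apply_le n).antisymm ?_⟩) ?_
  · exact hn _ (v.apply_first (v.coe_lt n)).symm
  · rintro _ ⟨j, hj, rfl⟩ m hm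
    exact (v.isFirst_first hj).le_of_apply_eq ((Setoid.ker_def.1 hm).symm.trans (v.apply_first hj))

theorem pRep_ker {j : ℕ} (hj : (j : ℕ∞) < K) : pRep (Setoid.ker v) j = v.first j := by
  induction j using Nat.strong_induction_on with
  | h j ih =>
  have hlt {i : ℕ} (hi : i < j) : pRep (Setoid.ker v) i = v.first i :=
    ih i hi ((Nat.cast_lt.2 hi).trans hj)
  refine (Nat.nth_eq_sInf _ j).trans (IsLeast.csInf_eq ⟨⟨?_, fun i hi => ?_⟩, fun n ⟨hn, h⟩ => ?_⟩)
  · exact v.minReps_ker ▸ mem_image_of_mem _ hj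
  · exact (hlt hi).trans_lt (v.first_lt_first hi hj)
  · obtain ⟨i, hi, rfl⟩ := v.minReps_ker ▸ hn
    rcases lt_trichotomy i j with hij | rfl | hij
    · exact absurd (hlt hij) (h i hij).ne
    · exact le_rfl
    · exact (v.first_lt_first hij hi).le

theorem isTyped_ker : IsTyped l K (Setoid.ker v) where
  encard_minReps := by rw [minReps_ker, v.first_injOn.encard_image, encard_setOf_coe_lt]
  pRep_mod j hj := by rw [pRep_ker v hj, v.first_mod hj]
  mod_le := by
    rw [minReps_ker]
    rintro _ ⟨j, hj, rfl⟩ m hm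
    rw [v.first_mod hj, ← v.apply_first hj, Setoid.ker_def.1 hm]
    exact v.mod_le m

end RigidSurj

namespace IsTyped

variable {E : Setoid ℕ}

theorem forall_lt_card (hE : IsTyped l K E) {j : ℕ} (hj : (j : ℕ∞) < K) :
    ∀ hs : (minReps E).Finite, j < hs.toFinset.card :=
  coe_lt_encard_iff.1 (hj.trans_eq hE.encard_minReps.symm)

theorem pRep_mem (hE : IsTyped l K E) {j : ℕ} (hj : (j : ℕ∞) < K) : pRep E j ∈ minReps E :=
  Nat.nth_mem j (hE.forall_lt_card hj)

theorem pRep_lt_pRep (hE : IsTyped l K E) {i j : ℕ} (hij : i < j) (hj : (j : ℕ∞) < K) :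
    pRep E i < pRep E j :=
  Nat.nth_lt_nth' hij (hE.forall_lt_card hj)

theorem exists_rel_pRep (hE : IsTyped l K E) (n : ℕ) :
    ∃ j : ℕ, (j : ℕ∞) < K ∧ E.r n (pRep E j) := by
  obtain ⟨m, hm, hnm⟩ := exists_mem_minReps E n
  obtain ⟨j, hj, rfl⟩ := Nat.exists_lt_card_nth_eq hm
  exact ⟨j, (coe_lt_encard_iff.2 hj).trans_eq hE.encard_minReps, hnm⟩

theorem eq_of_rel_pRep (hE : IsTyped l K E) {i j : ℕ} (hi : (i : ℕ∞) < K) (hj : (j : ℕ∞) < K)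
    (h : E.r (pRep E i) (pRep E j)) : i = j := by
  have heq := eq_of_mem_minReps (hE.pRep_mem hi) (hE.pRep_mem hj) h
  rcases lt_trichotomy i j with hij | hij | hij
  · exact absurd heq (hE.pRep_lt_pRep hij hj).ne
  · exact hij
  · exact absurd heq (hE.pRep_lt_pRep hij hi).ne'

theorem exists_ker_eq (hE : IsTyped l K E) : ∃ v : RigidSurj l K, E = Setoid.ker v := by
  choose v hvK hv using hE.exists_rel_pRep
  have hv_eq {n j : ℕ} (hj : (j : ℕ∞) < K) (h : E.r n (pRep E j)) : v n = j :=
    hE.eq_of_rel_pRep (hvK n) hj (E.trans (E.symm (hv n)) h)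
  refine ⟨⟨v, fun n => ?_, hvK, fun j hj => ⟨pRep E j, ⟨hv_eq hj (E.refl _), fun m hm => ?_⟩,
    hE.pRep_mod j hj⟩⟩, Setoid.ext fun n m => ⟨fun h => ?_, fun h => ?_⟩⟩
  · rw [← hE.pRep_mod _ (hvK n)]
    exact hE.mod_le _ (hE.pRep_mem (hvK n)) n (E.symm (hv n))
  · by_contra! hjm
    refine hm.not_ge (le_trans ?_ (hE.pRep_mem (hvK m) m (E.symm (hv m))))
    exact hjm.eq_or_lt.elim (fun h => h ▸ le_rfl) fun h => (hE.pRep_lt_pRep h (hvK m)).le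
  · exact hv_eq (hvK m) (E.trans h (hv m))
  · have hvnm : v n = v m := h
    exact E.trans (hvnm ▸ hv n) (E.symm (hv m))

end IsTyped

theorem isTyped_iff_exists_ker {E : Setoid ℕ} :
    IsTyped l K E ↔ ∃ v : RigidSurj l K, E = Setoid.ker v :=
  ⟨IsTyped.exists_ker_eq, fun ⟨v, hv⟩ => hv ▸ v.isTyped_ker⟩

namespace RigidSurj

/-- The equivalence relation on `ω·l` whose classes are the fibres of `v`. -/
def toSetoid (v : RigidSurj l K) : Setoid (ℕ × Fin l) := Setoid.ker fun a => v (encodeL a)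

theorem toSetoid_decodeL_iff (hl : 0 < l) {v : RigidSurj l K} {n m : ℕ} :
    v.toSetoid.r (decodeL l hl n) (decodeL l hl m) ↔ v n = v m := by
  change v (encodeL _) = v (encodeL _) ↔ v n = v m
  rw [encodeL_decodeL, encodeL_decodeL]

theorem comap_decodeL_eq_ker_iff (hl : 0 < l) {E : Setoid (ℕ × Fin l)} {v : RigidSurj l K} :
    E.comap (decodeL l hl) = Setoid.ker v ↔ E = v.toSetoid := by
  refine ⟨fun h => Setoid.ext fun a b => ?_, ?_⟩
  · have hab := Setoid.ext_iff.1 h (encodeL a) (encodeL b)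
    rwa [Setoid.comap_rel, decodeL_encodeL, decodeL_encodeL] at hab
  · rintro rfl
    exact Setoid.ext fun n m => toSetoid_decodeL_iff hl

theorem mem_EInfL_iff_exists_toSetoid (hl : 0 < l) {E : Setoid (ℕ × Fin l)} :
    E ∈ EInfL l hl ↔ ∃ w : RigidSurj l ⊤, E = w.toSetoid := by
  simp only [mem_EInfL_iff, isTyped_iff_exists_ker, comap_decodeL_eq_ker_iff]

theorem mem_EkL_iff_exists_toSetoid (hl : 0 < l) {k : ℕ} {E : Setoid (ℕ × Fin l)} :
    E ∈ EkL l hl k ↔ ∃ v : RigidSurj l (k : ℕ∞), E = v.toSetoid := by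
  simp only [mem_EkL_iff, isTyped_iff_exists_ker, comap_decodeL_eq_ker_iff]

theorem coarsens_toSetoid_iff (hl : 0 < l) {v : RigidSurj l K} {w : RigidSurj l ⊤} :
    Coarsens v.toSetoid w.toSetoid ↔ ∃ u : RigidSurj l K, v = u.comp w := by
  refine ⟨fun h => exists_eq_comp_of_factorsThrough fun n m hnm => ?_, ?_⟩
  · exact (toSetoid_decodeL_iff hl).1 (h _ _ ((toSetoid_decodeL_iff hl).2 hnm))
  · rintro ⟨u, rfl⟩ a b h
    exact congrArg u h

/-- The element of `𝓔_k(ω·l)` given by the fibres of `v`. -/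
def toEkL (hl : 0 < l) {k : ℕ} (v : RigidSurj l (k : ℕ∞)) : EkL l hl k :=
  ⟨v.toSetoid, (mem_EkL_iff_exists_toSetoid hl).2 ⟨v, rfl⟩⟩

theorem continuous_toEkL (hl : 0 < l) {k : ℕ} :
    @Continuous _ _ _ (graphTop (EkL l hl k)) (toEkL hl) := by
  refine continuous_induced_rng.2 (continuous_pi fun q => ?_)
  have hdecide : Continuous fun p : ℕ × ℕ => @decide (p.1 = p.2) (Classical.dec _) :=
    continuous_of_discreteTopology
  exact hdecide.comp ((continuous_apply (encodeL q.1)).prodMk (continuous_apply (encodeL q.2)))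

end RigidSurj

end Kernel

/-- **Corollary 3.8 (dual Ramsey theorem for `ω·l`):** for every `k < ω` and every
finite Souslin measurable colouring of `𝓔_k(ω·l)` (with the topology inherited from
`2^((ω·l)×(ω·l))`) and every `E ∈ 𝓔_∞(ω·l)`, there is `F ∈ 𝓔_∞(ω·l)` with `F ≤ E`
such that the colouring is constant on `𝓔_k(ω·l) ↾ F`. -/
theorem dualRamseyOmegaL (l : ℕ) (hl : 0 < l) (k : ℕ)
    (m : ℕ) (c : ↥(EkL l hl k) → Fin m)
    (hc : ∀ i : Fin m, SouslinMeasurable (graphTop (EkL l hl k)) {E | c E = i})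
    (E : ↥(EInfL l hl)) :
    ∃ F ∈ EInfL l hl, Coarsens F E.1 ∧
      ∀ F₁ F₂ : ↥(EkL l hl k), Coarsens F₁.1 F → Coarsens F₂.1 F → c F₁ = c F₂ := by
  obtain ⟨w₀, hw₀⟩ := (RigidSurj.mem_EInfL_iff_exists_toSetoid hl).1 E.2
  let φ (v : RigidSurj l k) : EkL l hl k := RigidSurj.toEkL hl (v.comp w₀)
  let := graphTop (EkL l hl k)
  have hφ : Continuous φ :=
    (RigidSurj.continuous_toEkL hl).comp (RigidSurj.continuous_comp_right w₀)
  obtain ⟨w, hw⟩ := RigidSurj.exists_forall_comp_eq hl (c := fun v => c (φ v)) fun i =>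
    (hc i).baireMeasurableSet_preimage hφ
  have hF (F' : EkL l hl k) (h : Coarsens F'.1 (w.comp w₀).toSetoid) :
      ∃ v : RigidSurj l k, F' = φ (v.comp w) := by
    obtain ⟨v, hv⟩ := (RigidSurj.mem_EkL_iff_exists_toSetoid hl).1 F'.2
    obtain ⟨u, rfl⟩ := (RigidSurj.coarsens_toSetoid_iff hl).1 (hv ▸ h)
    exact ⟨u, Subtype.ext hv⟩
  refine ⟨(w.comp w₀).toSetoid, (RigidSurj.mem_EInfL_iff_exists_toSetoid hl).2 ⟨_, rfl⟩,
    hw₀ ▸ (RigidSurj.coarsens_toSetoid_iff hl).2 ⟨w, rfl⟩, fun F₁ F₂ h₁ h₂ => ?_⟩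
  obtain ⟨v₁, rfl⟩ := hF F₁ h₁
  obtain ⟨v₂, rfl⟩ := hF F₂ h₂
  exact hw v₁ v₂

end DualRamsey
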